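/- arXiv:1609.04195 — 4 statements merged into one kernel-verified Lean document; each statement's English description precedes it below -/
import Mathlib

section
/- Let A be an n×n complex Hermitian matrix with n ≥ 2, let r ≥ 1 be an integer, and let 1 ≤ i ≤ n. Then χ_r[A] has n real roots λ₁ ≤ ⋯ ≤ λ_n (counted with multiplicity) and χ_r[A_i] has n−1 real roots μ₁ ≤ ⋯ ≤ μ_{n−1}, and these interlace: λ_k ≤ μ_k ≤ λ_{k+1} for all 1 ≤ k ≤ n−1. -/
open Polynomial Matrix

/-- The number of cycles of a permutation, counting fixed points as cycles. -/
def cycleCount {ι : Type*} [Fintype ι] [DecidableEq ι] (σ : Equiv.Perm ι) : ℕ :=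
  σ.cycleType.card + (Fintype.card ι - σ.support.card)

/-- The `r`-determinant `det_r(M) = Σ_σ sgn(σ) r^{c(σ)} Π_i M_{i σ(i)}`. -/
noncomputable def detr {ι : Type*} [Fintype ι] [DecidableEq ι] {R : Type*} [CommRing R]
    (r : ℕ) (M : Matrix ι ι R) : R :=
  ∑ σ : Equiv.Perm ι, ((Equiv.Perm.sign σ : ℤ) : R) * (r : R) ^ cycleCount σ * ∏ i, M i (σ i)

/-- The `r`-characteristic polynomial `χ_r[A](x) = det_r(xI - A)`. -/
noncomputable def chir {n : ℕ} (r : ℕ) (A : Matrix (Fin n) (Fin n) ℂ) : Polynomial ℂ :=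
  detr r (Matrix.charmatrix A)

section Counting

variable {ι : Type*} [Fintype ι] [DecidableEq ι]

/-- Functions constant along the cycles of `σ` are functions on the set of cycles. -/
noncomputable def invFunEquiv (σ : Equiv.Perm ι) (β : Type*) :
    {f : ι → β // ∀ j, f j = f (σ j)} ≃ ((σ.cycleFactorsFinset ⊕ {x // σ x = x}) → β) where
  toFun f := Sum.elim
    (fun c => f.1 ((Equiv.Perm.Basis.nonempty σ).some c)) (fun x => f.1 x.1)
  invFun g := ⟨fun x => if h : σ x = x then g (Sum.inr ⟨x, h⟩) else
    g (Sum.inl ⟨σ.cycleOf x, Equiv.Perm.cycleOf_mem_cycleFactorsFinset_iff.2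
      (Equiv.Perm.mem_support.2 h)⟩), by
    intro j
    by_cases h : σ j = j
    · simp [h]
    · have h2 : σ (σ j) ≠ σ j := fun h' => h (σ.injective h')
      simp only [h, h2, dite_false]
      congr 3
      apply Equiv.Perm.SameCycle.cycleOf_eq
      exact ⟨1, by simp⟩⟩
  left_inv := by
    rintro ⟨f, hf⟩
    have key : ∀ x y, σ.SameCycle x y → f x = f y := by
      intro x y hxy
      obtain ⟨k, hk⟩ := hxy.exists_pow_eq'
      rw [← hk.2]
      clear hk
      induction k with
      | zero => simp
      | succ m ih => rw [ih, pow_succ', Equiv.Perm.mul_apply, ← hf]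
    ext x
    by_cases h : σ x = x
    · simp [h]
    · simp only [h, dite_false, Sum.elim_inl]
      apply key
      have hm := Equiv.Perm.cycleOf_mem_cycleFactorsFinset_iff.2
        (Equiv.Perm.mem_support.2 h)
      exact (Equiv.Perm.Basis.nonempty σ).some.sameCycle hm
  right_inv := by
    intro g
    ext c
    rcases c with c | c
    · set a := (Equiv.Perm.Basis.nonempty σ).some with ha
      have h1 := a.cycleOf_eq c
      have h2 : σ (a c) ≠ a c := by
        have := Equiv.Perm.mem_cycleFactorsFinset_support_le c.2 (a.mem_support_self c)
        exact Equiv.Perm.mem_support.1 this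
      simp only [Sum.elim_inl, h2, dite_false, h1]
    · simp [c.2]

lemma card_inv_fun (σ : Equiv.Perm ι) (r : ℕ) :
    Fintype.card {f : ι → Fin r // ∀ j, f j = f (σ j)} = r ^ cycleCount σ := by
  rw [Fintype.card_congr (invFunEquiv σ (Fin r)), Fintype.card_fun, Fintype.card_fin,
    Fintype.card_sum]
  congr 2
  · simp [Equiv.Perm.cycleType]
  · have := Fintype.card_subtype_compl (fun x => x ∈ σ.support)
    simp only [Equiv.Perm.mem_support, not_not] at this
    rw [this]
    simp [Fintype.card_subtype, Equiv.Perm.support]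

lemma detr_eq_sum_prod {R : Type*} [CommRing R] (r : ℕ) (M : Matrix ι ι R) :
    detr r M = ∑ f : ι → Fin r, ∏ c, (M.toSquareBlock f c).det := by
  have h1 : ∀ f : ι → Fin r, ∏ c, (M.toSquareBlock f c).det =
      (Matrix.of fun j k => if f k = f j then M j k else 0 : Matrix ι ι R).det := by
    intro f
    rw [Matrix.BlockTriangular.det_fintype (b := f)]
    · apply Finset.prod_congr rfl
      intro c _
      congr 1
      ext ⟨j, hj⟩ ⟨k, hk⟩
      simp [Matrix.toSquareBlock, Matrix.toSquareBlockProp, hj, hk]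
    · intro j k h
      simp [h.ne]
  simp_rw [h1]
  simp_rw [← Matrix.det_transpose (Matrix.of _), Matrix.det_apply', detr]
  rw [Finset.sum_comm]
  apply Finset.sum_congr rfl
  intro σ _
  simp only [Matrix.transpose_apply, Matrix.of_apply]
  rw [← Finset.mul_sum, mul_assoc]
  congr 1
  have h2 : ∀ f : ι → Fin r, (∏ i, if f (σ i) = f i then M i (σ i) else 0) =
      if (∀ j, f j = f (σ j)) then ∏ i, M i (σ i) else 0 := by
    intro f
    split_ifs with h
    · exact Finset.prod_congr rfl fun i _ => by simp [h i]
    · push Not at h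
      obtain ⟨j, hj⟩ := h
      exact Finset.prod_eq_zero (Finset.mem_univ j) (by simp [Ne.symm hj])
  simp_rw [h2]
  rw [← Finset.sum_filter, Finset.sum_const, nsmul_eq_mul, ← Fintype.card_subtype, card_inv_fun]
  simp

end Counting
section Minors

variable {ι : Type*} [Fintype ι] [DecidableEq ι]

/-- `M` restricted to `U × U` and completed by the identity. -/
def maskM (M : Matrix ι ι ℂ) (U : Finset ι) : Matrix ι ι ℂ :=
  Matrix.of fun j k => if j ∈ U ∧ k ∈ U then M j k else if j = k then 1 else 0

/-- principal minor. -/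
noncomputable def pminor (M : Matrix ι ι ℂ) (U : Finset ι) : ℂ := (maskM M U).det

lemma pminor_eq (M : Matrix ι ι ℂ) (U : Finset ι) (p : ι → Prop) [DecidablePred p]
    (hp : ∀ j, j ∈ U ↔ p j) :
    pminor M U = (M.toSquareBlockProp p).det := by
  rw [pminor, Matrix.twoBlockTriangular_det _ p]
  · have h1 : (maskM M U).toSquareBlockProp p = M.toSquareBlockProp p := by
      ext ⟨j, hj⟩ ⟨k, hk⟩
      simp [maskM, Matrix.toSquareBlockProp, hp, hj, hk]
    have h2 : (maskM M U).toSquareBlockProp (fun i => ¬ p i) = 1 := by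
      ext ⟨j, hj⟩ ⟨k, hk⟩
      simp [maskM, Matrix.toSquareBlockProp, hp, hj, Matrix.one_apply]
    rw [h1, h2]
    simp
  · intro i hi j hj
    have : i ≠ j := by rintro rfl; exact hi hj
    simp [maskM, hp, hi, this]

lemma pminor_insert (A : Matrix ι ι ℂ) (z : ι → ℂ) (U : Finset ι) (i : ι) (hi : i ∉ U) (w : ℂ) :
    pminor (Matrix.diagonal (Function.update z i w) - A) (insert i U) =
      pminor (Matrix.diagonal z - A) U * w +
        pminor (Matrix.diagonal (Function.update z i 0) - A) (insert i U) := by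
  set N := maskM (Matrix.diagonal (Function.update z i 0) - A) (insert i U) with hN
  have h1 : maskM (Matrix.diagonal (Function.update z i w) - A) (insert i U) =
      N.updateRow i (w • Pi.single i 1 + N i) := by
    ext j k
    by_cases hj : j = i
    · subst hj
      by_cases hk : k = j
      · subst hk
        simp [maskM, hN]; ring
      · simp [maskM, hN, hk, Matrix.diagonal_apply, Ne.symm hk]
    · simp [maskM, hN, hj, Matrix.diagonal_apply, Function.update]
  have h2 : (N.updateRow i (Pi.single i 1)).det = pminor (Matrix.diagonal z - A) U := by
    rw [pminor, ← Matrix.det_transpose, ← Matrix.det_transpose (maskM _ _),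
      Matrix.det_apply', Matrix.det_apply']
    apply Finset.sum_congr rfl
    intro σ _
    congr 1
    by_cases hσ : σ i = i
    · apply Finset.prod_congr rfl
      intro j _
      by_cases hj : j = i
      · subst hj
        simp [hσ, maskM, hi]
      · have hsj : σ j ≠ i := by
          intro h
          exact hj (σ.injective (h.trans hσ.symm))
        simp [hN, maskM, hj, hsj, Matrix.diagonal_apply, Function.update]
    · rw [Finset.prod_eq_zero (Finset.mem_univ i), Finset.prod_eq_zero (Finset.mem_univ i)]
      · simp [maskM, hi, Ne.symm hσ]
      · simp [hσ]
  have h3 : N.updateRow i (N i) = N := by simp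
  rw [pminor, h1, Matrix.det_updateRow_add, Matrix.det_updateRow_smul, h2, h3, mul_comm]
  rfl

lemma pminor_update (A : Matrix ι ι ℂ) (z : ι → ℂ) (U : Finset ι) (i : ι) (hi : i ∉ U) (w : ℂ) :
    pminor (Matrix.diagonal (Function.update z i w) - A) U =
      pminor (Matrix.diagonal z - A) U := by
  unfold pminor
  congr 1
  ext j k
  by_cases hj : j = i
  · subst hj
    simp [maskM, hi]
  · simp [maskM, hj, Matrix.diagonal_apply, Function.update]

lemma det_ne_zero_of_upper {κ : Type*} [Fintype κ] [DecidableEq κ] (A : Matrix κ κ ℂ)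
    (hA : A.IsHermitian) (z : κ → ℂ) (hz : ∀ j, 0 < (z j).im) :
    (Matrix.diagonal z - A).det ≠ 0 := by
  intro h
  obtain ⟨v, hv, hv0⟩ := Matrix.exists_mulVec_eq_zero_iff.2 h
  rw [Matrix.sub_mulVec, sub_eq_zero] at hv0
  have h1 : star v ⬝ᵥ (Matrix.diagonal z *ᵥ v) = star v ⬝ᵥ (A *ᵥ v) := by rw [hv0]
  have h2 : (star v ⬝ᵥ (A *ᵥ v)).im = 0 := hA.im_star_dotProduct_mulVec_self v
  rw [← h1] at h2
  have h3 : (star v ⬝ᵥ (Matrix.diagonal z *ᵥ v)).im = ∑ j, (z j).im * Complex.normSq (v j) := by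
    simp only [dotProduct, Matrix.mulVec_diagonal, Complex.im_sum]
    apply Finset.sum_congr rfl
    intro j _
    simp [Complex.normSq_apply]
    ring
  rw [h3] at h2
  have h4 := (Finset.sum_eq_zero_iff_of_nonneg (fun j _ =>
    mul_nonneg (hz j).le (Complex.normSq_nonneg (v j)))).1 h2
  apply hv
  ext j
  have h5 := h4 j (Finset.mem_univ j)
  rcases mul_eq_zero.1 h5 with h6 | h6
  · exact absurd h6 (hz j).ne'
  · simpa using h6

lemma pminor_ne_zero (A : Matrix ι ι ℂ) (hA : A.IsHermitian) (z : ι → ℂ)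
    (hz : ∀ j, 0 < (z j).im) (U : Finset ι) : pminor (Matrix.diagonal z - A) U ≠ 0 := by
  rw [pminor_eq _ U (fun j => j ∈ U) (fun j => Iff.rfl)]
  have h : (Matrix.diagonal z - A).toSquareBlockProp (fun j => j ∈ U) =
      Matrix.diagonal (fun j : {j // j ∈ U} => z j) - A.submatrix Subtype.val Subtype.val := by
    ext ⟨j, hj⟩ ⟨k, hk⟩
    simp [Matrix.toSquareBlockProp, Matrix.diagonal_apply]
  rw [h]
  have := det_ne_zero_of_upper (κ := {j // j ∈ U}) _
    (hA.submatrix (Subtype.val : {j // j ∈ U} → ι)) (fun j => z j) (fun j => hz j)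
  convert this

end Minors

section Vieta

lemma vieta_im (r : ℕ) (hr : 1 ≤ r) (F : ℂ[X]) (hdeg : F.natDegree ≤ r) (h0 : F.coeff r ≠ 0)
    (hF : ∀ w : ℂ, 0 < w.im → F.eval w ≠ 0) : 0 ≤ ((X * F).coeff r / F.coeff r).im := by
  have hd : F.natDegree = r := le_antisymm hdeg (le_natDegree_of_ne_zero h0)
  have h1 := (IsAlgClosed.splits F).nextCoeff_eq_neg_sum_roots_mul_leadingCoeff
  obtain ⟨m, rfl⟩ : ∃ m, r = m + 1 := ⟨r - 1, by omega⟩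
  rw [nextCoeff_of_natDegree_pos (by omega), leadingCoeff, hd, Nat.add_sub_cancel] at h1
  rw [coeff_X_mul, h1, mul_div_assoc, mul_comm]
  have hne : F ≠ 0 := by rintro rfl; simp at h0
  have h2 : ∀ s : Multiset ℂ, (∀ x ∈ s, x.im ≤ 0) → s.sum.im ≤ 0 := by
    intro s
    induction s using Multiset.induction with
    | empty => simp
    | cons a s ih =>
      intro hs
      simp only [Multiset.sum_cons, Complex.add_im]
      have := hs a (by simp)
      have := ih (fun x hx => hs x (by simp [hx]))
      linarith
  have h3 := h2 F.roots (by
    intro x hx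
    by_contra hlt
    exact hF x (not_le.1 hlt) ((mem_roots hne).1 hx))
  have : F.coeff (m+1) / F.coeff (m+1) = 1 := div_self h0
  field_simp
  simpa using h3

lemma prod_lin_coeff {κ : Type*} [DecidableEq κ] (s : Finset κ) (a b : κ → ℂ) :
    (∏ c ∈ s, (C (a c) * X + C (b c))).natDegree ≤ s.card ∧
    (∏ c ∈ s, (C (a c) * X + C (b c))).coeff s.card = ∏ c ∈ s, a c ∧
    (X * ∏ c ∈ s, (C (a c) * X + C (b c))).coeff s.card =
      ∑ c ∈ s, b c * ∏ d ∈ s.erase c, a d := by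
  induction s using Finset.induction_on with
  | empty => simp
  | insert c s hc ih =>
    obtain ⟨h1, h2, h3⟩ := ih
    rw [Finset.prod_insert hc, Finset.card_insert_of_notMem hc]
    set p := ∏ c ∈ s, (C (a c) * X + C (b c)) with hp
    refine ⟨?_, ?_, ?_⟩
    · refine natDegree_mul_le.trans ?_
      have : (C (a c) * X + C (b c)).natDegree ≤ 1 := natDegree_linear_le
      omega
    · have e : (C (a c) * X + C (b c)) * p = C (a c) * (X * p) + C (b c) * p := by ring
      rw [e, coeff_add, coeff_C_mul, coeff_C_mul, coeff_X_mul, h2,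
        coeff_eq_zero_of_natDegree_lt (by omega), Finset.prod_insert hc]
      ring
    · have e : (C (a c) * X + C (b c)) * p = C (a c) * (X * p) + C (b c) * p := by ring
      rw [coeff_X_mul, e, coeff_add, coeff_C_mul, coeff_C_mul, h3, h2, Finset.sum_insert hc,
        Finset.erase_insert hc, Finset.mul_sum, add_comm]
      congr 1
      apply Finset.sum_congr rfl
      intro d hd
      have hcd : c ≠ d := by rintro rfl; exact hc hd
      rw [Finset.erase_insert_of_ne hcd, Finset.prod_insert (by simp [hc])]
      ring

end Vieta
section Mixed

variable {ι : Type*} [Fintype ι] [DecidableEq ι]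

/-- partially mixed determinant (with harmless overcounting). -/
noncomputable def mixP (r : ℕ) (A : Matrix ι ι ℂ) (z : ι → ℂ) (S T : Finset ι) : ℂ :=
  ∑ f : ι → Fin r, ∏ c, pminor (Matrix.diagonal z - A) (T ∪ S.filter (fun j => f j = c))

lemma sum_update {κ : Type*} [Fintype κ] [DecidableEq κ] (i : ι) (h : (ι → κ) → ℂ) :
    (Fintype.card κ : ℂ) * ∑ f, h f = ∑ f, ∑ c, h (Function.update f i c) := by
  let e : (ι → κ) × κ ≃ (ι → κ) × κ :=
    { toFun := fun p => (Function.update p.1 i p.2, p.1 i)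
      invFun := fun p => (Function.update p.1 i p.2, p.1 i)
      left_inv := fun p => by simp
      right_inv := fun p => by simp }
  have h1 := Equiv.sum_comp e (fun p => h p.1)
  rw [Fintype.sum_prod_type, Fintype.sum_prod_type] at h1
  simp only [e, Equiv.coe_fn_mk, Finset.sum_const, Finset.card_univ, nsmul_eq_mul] at h1
  rw [h1, Finset.mul_sum]

lemma mixP_step (r : ℕ) (hr : 1 ≤ r) (A : Matrix ι ι ℂ) (z : ι → ℂ) (hz : ∀ j, 0 < (z j).im)
    (S T : Finset ι) (i : ι) (hS : i ∉ S) (hT : i ∉ T)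
    (h0 : mixP r A z S T ≠ 0)
    (h1 : ∀ w : ℂ, 0 < w.im → mixP r A (Function.update z i w) S (insert i T) ≠ 0) :
    0 < ((r : ℂ) * mixP r A z (insert i S) T / mixP r A z S T).im := by
  let W : (ι → Fin r) → Fin r → Finset ι := fun f c => T ∪ S.filter (fun j => f j = c)
  have hW : ∀ f c, i ∉ W f c := by
    intro f c
    simp [W, hS, hT]
  let a : (ι → Fin r) → Fin r → ℂ := fun f c => pminor (Matrix.diagonal z - A) (W f c)
  let b : (ι → Fin r) → Fin r → ℂ := fun f c =>
    pminor (Matrix.diagonal (Function.update z i 0) - A) (insert i (W f c))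
  let F : ℂ[X] := ∑ f, ∏ c, (C (a f c) * X + C (b f c))
  have hlin : ∀ f c w, pminor (Matrix.diagonal (Function.update z i w) - A) (insert i (W f c)) =
      a f c * w + b f c := fun f c w => pminor_insert A z _ i (hW f c) w
  have hFe : ∀ w, F.eval w = mixP r A (Function.update z i w) S (insert i T) := by
    intro w
    simp only [F, eval_finsetSum, eval_prod, mixP]
    apply Finset.sum_congr rfl
    intro f _
    apply Finset.prod_congr rfl
    intro c _
    rw [Finset.insert_union, hlin]
    simp
  have hdeg : F.natDegree ≤ r := by
    apply natDegree_sum_le_of_forall_le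
    intro f _
    simpa using (prod_lin_coeff Finset.univ (a f) (b f)).1
  have hc1 : F.coeff r = mixP r A z S T := by
    simp only [F, finsetSum_coeff, mixP]
    apply Finset.sum_congr rfl
    intro f _
    simpa using (prod_lin_coeff Finset.univ (a f) (b f)).2.1
  have hc2 : (X * F).coeff r = ∑ f, ∑ c, b f c * ∏ d ∈ Finset.univ.erase c, a f d := by
    simp only [F, Finset.mul_sum, finsetSum_coeff]
    apply Finset.sum_congr rfl
    intro f _
    simpa using (prod_lin_coeff Finset.univ (a f) (b f)).2.2
  have hmain : (r : ℂ) * mixP r A z (insert i S) T = (X * F).coeff r +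
      r * z i * mixP r A z S T := by
    have hu := sum_update i (fun f : ι → Fin r => ∏ c, pminor (Matrix.diagonal z - A)
      (T ∪ (insert i S).filter (fun j => f j = c)))
    rw [Fintype.card_fin] at hu
    rw [mixP, hu, hc2, mixP, Finset.mul_sum, ← Finset.sum_add_distrib]
    apply Finset.sum_congr rfl
    intro f _
    have e1 : ∀ c, ∏ d, pminor (Matrix.diagonal z - A)
        (T ∪ (insert i S).filter (fun j => Function.update f i c j = d)) =
        b f c * ∏ d ∈ Finset.univ.erase c, a f d + z i * ∏ d, a f d := by
      intro c
      rw [← Finset.mul_prod_erase _ _ (Finset.mem_univ c)]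
      rw [← Finset.mul_prod_erase _ (a f) (Finset.mem_univ c)]
      have e2 : T ∪ (insert i S).filter (fun j => Function.update f i c j = c) =
          insert i (W f c) := by
        ext j
        by_cases hj : j = i
        · subst hj; simp
        · simp [hj, W]
      have e3 : ∀ d ∈ Finset.univ.erase c, pminor (Matrix.diagonal z - A)
          (T ∪ (insert i S).filter (fun j => Function.update f i c j = d)) = a f d := by
        intro d hd
        have hcd : c ≠ d := (Finset.ne_of_mem_erase hd).symm
        have : T ∪ (insert i S).filter (fun j => Function.update f i c j = d) = W f d := by
          ext j
          by_cases hj : j = i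
          · subst hj; simp [hcd, hT, W, hS]
          · simp [hj, W]
        rw [this]
      have e4 := hlin f c (z i)
      rw [Function.update_eq_self] at e4
      rw [e2, Finset.prod_congr rfl e3, e4]
      ring
    simp_rw [e1]
    rw [Finset.sum_add_distrib, Finset.sum_const]
    simp [a, W, mul_assoc]
  have hv := vieta_im r hr F hdeg (by rwa [hc1]) (fun w hw => by rw [hFe]; exact h1 w hw)
  rw [hc1] at hv
  rw [hmain, add_div, mul_div_cancel_right₀ _ h0, Complex.add_im]
  have : 0 < ((r : ℂ) * z i).im := by
    simp only [Complex.mul_im, Complex.natCast_re, Complex.natCast_im, zero_mul, add_zero]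
    exact mul_pos (by exact_mod_cast hr) (hz i)
  linarith

lemma mixP_ne_zero (r : ℕ) (hr : 1 ≤ r) (A : Matrix ι ι ℂ) (hA : A.IsHermitian) (S : Finset ι) :
    ∀ (T : Finset ι), Disjoint S T → ∀ (z : ι → ℂ), (∀ j, 0 < (z j).im) →
      mixP r A z S T ≠ 0 := by
  induction S using Finset.induction_on with
  | empty =>
    intro T _ z hz
    simp only [mixP, Finset.filter_empty, Finset.union_empty, Finset.sum_const,
      Finset.prod_const]
    have := pminor_ne_zero A hA z hz T
    have hr' : r ≠ 0 := by omega
    simp [this, hr']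
  | insert i S hi ih =>
    intro T hd z hz
    rw [Finset.disjoint_insert_left] at hd
    have := mixP_step r hr A z hz S T i hi hd.1 (ih T hd.2 z hz) (by
      intro w hw
      apply ih
      · rw [Finset.disjoint_insert_right]; exact ⟨hi, hd.2⟩
      · intro j
        by_cases hj : j = i
        · subst hj; simpa using hw
        · simpa [hj] using hz j)
    intro h0
    simp [h0] at this

lemma mixP_ratio (r : ℕ) (hr : 1 ≤ r) (A : Matrix ι ι ℂ) (hA : A.IsHermitian) (i : ι)
    (z : ι → ℂ) (hz : ∀ j, 0 < (z j).im) :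
    0 < ((r : ℂ) * mixP r A z Finset.univ ∅ / mixP r A z (Finset.univ.erase i) ∅).im := by
  have := mixP_step r hr A z hz (Finset.univ.erase i) ∅ i (by simp) (by simp)
    (mixP_ne_zero r hr A hA _ _ (by simp) z hz) (by
      intro w hw
      apply mixP_ne_zero r hr A hA
      · simp
      · intro j
        by_cases hj : j = i
        · subst hj; simpa using hw
        · simpa [hj] using hz j)
  rwa [Finset.insert_erase (Finset.mem_univ i)] at this

lemma detr_eq_mixP (r : ℕ) (A : Matrix ι ι ℂ) (z : ι → ℂ) :
    detr r (Matrix.diagonal z - A) = mixP r A z Finset.univ ∅ := by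
  rw [detr_eq_sum_prod, mixP]
  apply Finset.sum_congr rfl
  intro f _
  apply Finset.prod_congr rfl
  intro c _
  rw [pminor_eq _ _ (fun j => f j = c) (by simp)]
  rfl

lemma detr_minor_eq_mixP {n : ℕ} (r : ℕ) (A : Matrix (Fin (n+1)) (Fin (n+1)) ℂ)
    (z : Fin (n+1) → ℂ) (i : Fin (n+1)) :
    mixP r A z (Finset.univ.erase i) ∅ =
      r * detr r (Matrix.diagonal (z ∘ i.succAbove) - A.submatrix i.succAbove i.succAbove) := by
  rw [detr_eq_sum_prod, mixP,
    ← Equiv.sum_comp (Fin.insertNthEquiv (fun _ : Fin (n+1) => Fin r) i),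
    Fintype.sum_prod_type]
  have hconst : ∀ v : ℂ, (r : ℂ) * v = ∑ _a : Fin r, v := by intro v; simp
  rw [hconst]
  apply Finset.sum_congr rfl
  intro a _
  apply Finset.sum_congr rfl
  intro f _
  apply Finset.prod_congr rfl
  intro c _
  let q : Fin (n+1) → Prop := fun j => ∃ k, f k = c ∧ i.succAbove k = j
  have : DecidablePred q := Classical.decPred _
  rw [pminor_eq _ _ q]
  · let e : {k // f k = c} ≃ {j // q j} :=
      Equiv.ofBijective (fun k => ⟨i.succAbove k.1, k.1, k.2, rfl⟩) (by
        constructor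
        · intro x y hxy
          simpa [Subtype.ext_iff] using hxy
        · rintro ⟨j, k, hk, rfl⟩
          exact ⟨⟨k, hk⟩, rfl⟩)
    rw [← Matrix.det_submatrix_equiv_self e]
    congr 1
    ext x y
    have he : ∀ t, (e t).1 = i.succAbove t.1 := fun t => rfl
    simp [he, Matrix.toSquareBlock, Matrix.toSquareBlockProp, Matrix.diagonal_apply]
  · intro j
    rcases Fin.eq_self_or_eq_succAbove i j with rfl | ⟨k, rfl⟩
    · simp [q]
    · simp [q]

lemma detr_ratio {n : ℕ} (r : ℕ) (hr : 1 ≤ r) (A : Matrix (Fin (n+1)) (Fin (n+1)) ℂ)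
    (hA : A.IsHermitian) (i : Fin (n+1)) (x : ℂ) (hx : 0 < x.im) :
    0 < (detr r (Matrix.diagonal (fun _ => x) - A) /
      detr r (Matrix.diagonal (fun _ => x) - A.submatrix i.succAbove i.succAbove)).im := by
  have := mixP_ratio r hr A hA i (fun _ => x) (fun _ => hx)
  rw [← detr_eq_mixP, detr_minor_eq_mixP] at this
  rw [mul_div_mul_left _ _ (by simp; omega)] at this
  exact this

lemma detr_ne_zero (r : ℕ) (hr : 1 ≤ r) (A : Matrix ι ι ℂ)
    (hA : A.IsHermitian) (x : ℂ) (hx : x.im ≠ 0) :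
    detr r (Matrix.diagonal (fun _ => x) - A) ≠ 0 := by
  have key : ∀ y : ℂ, 0 < y.im → detr r (Matrix.diagonal (fun _ => y) - A) ≠ 0 := by
    intro y hy
    rw [detr_eq_mixP]
    exact mixP_ne_zero r hr A hA _ _ (by simp) _ (fun _ => hy)
  rcases lt_or_gt_of_ne hx with h | h
  · intro h0
    apply key (star x) (by simpa using h)
    rw [detr_eq_sum_prod] at h0 ⊢
    rw [← star_eq_zero, ← h0, star_sum]
    apply Finset.sum_congr rfl
    intro f _
    rw [star_prod]
    apply Finset.prod_congr rfl
    intro c _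
    rw [← Matrix.det_conjTranspose]
    congr 1
    ext ⟨j, hj⟩ ⟨k, hk⟩
    have := congrFun (congrFun hA.eq j) k
    rw [Matrix.conjTranspose_apply] at this
    by_cases hjk : j = k
    · subst hjk
      simpa [Matrix.toSquareBlock, Matrix.toSquareBlockProp] using this
    · simpa [Matrix.toSquareBlock, Matrix.toSquareBlockProp, hjk, Ne.symm hjk] using this
  · exact key x h

end Mixed
section Roots

lemma chir_eval {n : ℕ} (r : ℕ) (A : Matrix (Fin n) (Fin n) ℂ) (x : ℂ) :
    (chir r A).eval x = detr r (Matrix.diagonal (fun _ => x) - A) := by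
  simp only [chir, detr, eval_finsetSum, eval_mul, eval_prod, eval_pow, eval_natCast, eval_intCast]
  apply Finset.sum_congr rfl
  intro σ _
  congr 1
  apply Finset.prod_congr rfl
  intro j _
  by_cases h : j = σ j
  · rw [← h]; simp
  · simp [h]

lemma chir_degree {n : ℕ} (r : ℕ) (A : Matrix (Fin n) (Fin n) ℂ) :
    (chir r A).natDegree ≤ n ∧ (chir r A).coeff n = (r : ℂ) ^ n := by
  have h1 : chir r A = ∑ f : Fin n → Fin r, ∏ c, (A.toSquareBlock f c).charpoly := by
    rw [chir, detr_eq_sum_prod]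
    simp only [Matrix.charpoly, Matrix.charmatrix_toSquareBlock]
  have h2 : ∀ f : Fin n → Fin r, (∏ c, (A.toSquareBlock f c).charpoly).Monic ∧
      (∏ c, (A.toSquareBlock f c).charpoly).natDegree = n := by
    intro f
    refine ⟨monic_prod_of_monic _ _ fun c _ => Matrix.charpoly_monic _, ?_⟩
    rw [natDegree_prod_of_monic _ _ fun c _ => Matrix.charpoly_monic _]
    simp only [Matrix.charpoly_natDegree_eq_dim]
    rw [← Fintype.card_sigma, Fintype.card_congr (Equiv.sigmaFiberEquiv f), Fintype.card_fin]
  rw [h1]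
  constructor
  · apply natDegree_sum_le_of_forall_le
    intro f _
    exact (h2 f).2.le
  · rw [finsetSum_coeff]
    have : ∀ f ∈ (Finset.univ : Finset (Fin n → Fin r)),
        (∏ c, (A.toSquareBlock f c).charpoly).coeff n = 1 := by
      intro f _
      have h3 := (h2 f).1.coeff_natDegree
      rwa [(h2 f).2] at h3
    rw [Finset.sum_congr rfl this]
    simp

lemma exists_sorted {n : ℕ} (m : Multiset ℝ) (hm : m.card = n) :
    ∃ lam : Fin n → ℝ, Monotone lam ∧ Finset.univ.val.map lam = m := by
  subst hm
  obtain ⟨l, rfl⟩ : ∃ l : List ℝ, (l : Multiset ℝ) = m := Quot.exists_rep m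
  let g : Fin (Multiset.card (l : Multiset ℝ)) → ℝ := l.get
  refine ⟨g ∘ Tuple.sort g, Tuple.monotone_sort g, ?_⟩
  rw [← Multiset.map_map]
  have h1 : Multiset.map (Tuple.sort g) Finset.univ.val = Finset.univ.val := by
    have := congrArg Finset.val (Finset.map_univ_equiv (Tuple.sort g))
    exact this
  rw [h1]
  rw [Fin.univ_val_map]
  simp [g]

lemma chir_factor {n : ℕ} (r : ℕ) (hr : 1 ≤ r) (A : Matrix (Fin n) (Fin n) ℂ)
    (hA : A.IsHermitian) : ∃ lam : Fin n → ℝ, Monotone lam ∧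
      chir r A = C ((r : ℂ) ^ n) * ∏ k : Fin n, (X - C ((lam k : ℝ) : ℂ)) := by
  obtain ⟨hd, hc⟩ := chir_degree r A
  have hr0 : ((r : ℂ) ^ n) ≠ 0 := pow_ne_zero _ (by exact_mod_cast (by omega : r ≠ 0))
  have hdeg : (chir r A).natDegree = n := le_antisymm hd (le_natDegree_of_ne_zero (by rwa [hc]))
  have hne : chir r A ≠ 0 := by
    intro h; rw [h] at hc; exact hr0 (by simpa using hc.symm)
  have hs := IsAlgClosed.splits (chir r A)
  have hcard : (chir r A).roots.card = n := by
    exact hs.natDegree_eq_card_roots.symm.trans hdeg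
  obtain ⟨lam, hmono, hlam⟩ := exists_sorted ((chir r A).roots.map Complex.re) (by simpa using hcard)
  refine ⟨lam, hmono, ?_⟩
  have h1 := hs.eq_prod_roots
  have h2 : (chir r A).roots = Finset.univ.val.map (fun k => ((lam k : ℝ) : ℂ)) := by
    have : (chir r A).roots = ((chir r A).roots.map Complex.re).map (fun t : ℝ => (t : ℂ)) := by
      rw [Multiset.map_map]
      conv_lhs => rw [← Multiset.map_id (chir r A).roots]
      apply Multiset.map_congr rfl
      intro x hx
      have hx0 : (chir r A).eval x = 0 := (mem_roots hne).1 hx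
      rw [chir_eval] at hx0
      have : x.im = 0 := by
        by_contra h
        exact detr_ne_zero r hr A hA x h hx0
      apply Complex.ext <;> simp [this]
    rw [this, ← hlam, Multiset.map_map]
    rfl
  rw [leadingCoeff, hdeg, hc, h2, Multiset.map_map] at h1
  exact h1

end Roots

section Interlace

open Complex in
lemma theta_bound {n m : ℕ} (hnm : n = m + 1) (lam : Fin n → ℝ) (mu : Fin m → ℝ)
    (h : ∀ z : ℂ, 0 < z.im → 0 < ((∏ k, (z - lam k)) / (∏ k, (z - mu k))).im) :
    ∀ z : ℂ, 0 < z.im →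
      0 < (∑ k, arg (z - lam k)) - ∑ k, arg (z - mu k) ∧
      (∑ k, arg (z - lam k)) - (∑ k, arg (z - mu k)) < Real.pi := by
  set θ : ℂ → ℝ := fun z => (∑ k, arg (z - lam k)) - ∑ k, arg (z - mu k) with hθ
  have hpos : ∀ z : ℂ, 0 < z.im → 0 < Real.sin (θ z) := by
    intro z hz
    have hprod : ∀ (p : ℕ) (a : Fin p → ℝ), ∏ k, (z - a k) =
        ((∏ k, ‖z - a k‖ : ℝ) : ℂ) * exp ((∑ k, arg (z - a k) : ℝ) * I) := by
      intro p a
      push_cast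
      rw [Finset.sum_mul, Complex.exp_sum, ← Finset.prod_mul_distrib]
      apply Finset.prod_congr rfl
      intro k _
      exact (norm_mul_exp_arg_mul_I _).symm
    have hnorm : ∀ (p : ℕ) (a : Fin p → ℝ), 0 < ∏ k, ‖z - a k‖ := by
      intro p a
      apply Finset.prod_pos
      intro k _
      rw [norm_pos_iff]
      intro h0
      have := congrArg Complex.im h0
      simp at this
      exact hz.ne' this
    have h1 := h z hz
    have h2 : (∏ k, (z - lam k)) / (∏ k, (z - mu k)) =
        (((∏ k, ‖z - lam k‖) / (∏ k, ‖z - mu k‖) : ℝ) : ℂ) * exp ((θ z : ℝ) * I) := by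
      rw [hprod n lam, hprod m mu, mul_div_mul_comm, ← Complex.exp_sub, ← sub_mul, hθ]
      push_cast
      rfl
    rw [h2, Complex.im_ofReal_mul, Complex.exp_ofReal_mul_I_im] at h1
    exact pos_of_mul_pos_right h1 (div_pos (hnorm n lam) (hnorm m mu)).le
  have hcont : ContinuousOn θ {z : ℂ | 0 < z.im} := by
    have h1 : ∀ a : ℝ, ContinuousOn (fun z : ℂ => arg (z - a)) {z : ℂ | 0 < z.im} := by
      intro a z hz
      apply ContinuousAt.continuousWithinAt
      have : ContinuousAt arg (z - a) := continuousAt_arg (by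
        right; simp; exact (ne_of_gt hz))
      exact ContinuousAt.comp (f := fun z : ℂ => z - a) this (by fun_prop)
    exact (continuousOn_finsetSum _ fun k _ => h1 _).sub (continuousOn_finsetSum _ fun k _ => h1 _)
  have hconn : IsPreconnected {z : ℂ | 0 < z.im} :=
    (convex_halfSpace_im_gt 0).isPreconnected
  -- a base point
  have hbase : ∃ z₀ : ℂ, 0 < z₀.im ∧ 0 < θ z₀ ∧ θ z₀ < Real.pi := by
    let φ : ℝ → ℝ := fun t => (∑ k, arg (I - (t * lam k : ℝ))) - ∑ k, arg (I - (t * mu k : ℝ))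
    have hφ : ContinuousAt φ 0 := by
      have h1 : ∀ a : ℝ, ContinuousAt (fun t : ℝ => arg (I - (t * a : ℝ))) 0 := by
        intro a
        have : ContinuousAt arg (I - ((0 : ℝ) * a : ℝ)) := continuousAt_arg (by
          right; simp)
        exact ContinuousAt.comp (f := fun t : ℝ => I - ((t * a : ℝ) : ℂ)) this (by fun_prop)
      exact (tendsto_finsetSum _ fun k _ => h1 _).sub (tendsto_finsetSum _ fun k _ => h1 _)
    have hφ0 : φ 0 = Real.pi / 2 := by
      simp [φ, hnm]
      ring
    have hev : ∀ᶠ t in nhds (0 : ℝ), 0 < φ t ∧ φ t < Real.pi := by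
      have hp := Real.pi_pos
      exact (hφ.eventually (lt_mem_nhds (by rw [hφ0]; linarith))).and
        (hφ.eventually (gt_mem_nhds (by rw [hφ0]; linarith)))
    have hev2 : ∀ᶠ t in nhdsWithin (0 : ℝ) (Set.Ioi 0), 0 < φ t ∧ φ t < Real.pi :=
      hev.filter_mono nhdsWithin_le_nhds
    obtain ⟨t, ht, ht0⟩ := (hev2.and self_mem_nhdsWithin).exists
    have ht0 : 0 < t := ht0
    refine ⟨(t⁻¹ : ℝ) * I, by simpa using ht0, ?_⟩
    have : θ ((t⁻¹ : ℝ) * I) = φ t := by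
      have h1 : ∀ a : ℝ, arg ((t⁻¹ : ℝ) * I - a) = arg (I - (t * a : ℝ)) := by
        intro a
        rw [← arg_real_mul (I - (t * a : ℝ)) (inv_pos.2 ht0)]
        congr 1
        have : (t : ℂ) ≠ 0 := by exact_mod_cast ht0.ne'
        push_cast
        field_simp
      simp only [hθ, φ, h1]
    rw [this]
    exact ht
  obtain ⟨z₀, hz₀, hlo, hhi⟩ := hbase
  intro z hz
  change 0 < θ z ∧ θ z < Real.pi
  constructor
  · by_contra hle
    push Not at hle
    obtain ⟨y, hy, hy0⟩ := hconn.intermediate_value hz hz₀ hcont ⟨hle, hlo.le⟩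
    have := hpos y hy
    rw [hy0] at this
    simp at this
  · by_contra hle
    push Not at hle
    obtain ⟨y, hy, hy0⟩ := hconn.intermediate_value hz₀ hz hcont ⟨hhi.le, hle⟩
    have := hpos y hy
    rw [hy0] at this
    simp at this

open Complex in
lemma sum_arg_tendsto {p : ℕ} (a : Fin p → ℝ) (x : ℝ) (hx : ∀ k, a k ≠ x) :
    Filter.Tendsto (fun t : ℝ => ∑ k, arg ((x : ℂ) + t * I - a k)) (nhdsWithin 0 (Set.Ioi 0))
      (nhds (Real.pi * (Finset.univ.filter (fun k => x < a k)).card)) := by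
  have h1 : (Real.pi * ((Finset.univ.filter (fun k => x < a k)).card : ℝ)) =
      ∑ k, if x < a k then Real.pi else 0 := by
    rw [← Finset.sum_filter, Finset.sum_const, nsmul_eq_mul, mul_comm]
  rw [h1]
  apply tendsto_finsetSum
  intro k _
  have hc : Continuous (fun t : ℝ => (x : ℂ) + t * I - a k) := by fun_prop
  split_ifs with h
  · have h2 : Filter.Tendsto (fun t : ℝ => (x : ℂ) + t * I - a k) (nhdsWithin 0 (Set.Ioi 0))
        (nhdsWithin (x - a k : ℂ) {z : ℂ | 0 ≤ z.im}) := by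
      apply tendsto_nhdsWithin_iff.2
      constructor
      · have := (hc.tendsto 0).mono_left (nhdsWithin_le_nhds (s := Set.Ioi 0))
        simpa using this
      · filter_upwards [self_mem_nhdsWithin] with t ht
        have ht : 0 < t := ht
        simpa using ht.le
    exact (tendsto_arg_nhdsWithin_im_nonneg_of_re_neg_of_im_zero (by simpa using h)
      (by simp)).comp h2
  · have hlt : a k < x := lt_of_le_of_ne (not_lt.1 h) (hx k)
    have h3 : arg ((x : ℂ) - a k) = 0 := by
      rw [← ofReal_sub]
      exact arg_ofReal_of_nonneg (by linarith)
    have h4 : ContinuousAt arg ((x : ℂ) + (0 : ℝ) * I - a k) := continuousAt_arg (by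
      left; simpa using hlt)
    have h5 : ContinuousAt (fun t : ℝ => arg ((x : ℂ) + t * I - a k)) 0 :=
      ContinuousAt.comp (f := fun t : ℝ => (x : ℂ) + t * I - a k) h4 hc.continuousAt
    have h6 := h5.tendsto.mono_left (nhdsWithin_le_nhds (s := Set.Ioi 0))
    simpa [h3] using h6

lemma count_bound {n : ℕ} (lam : Fin (n+1) → ℝ) (mu : Fin n → ℝ)
    (h : ∀ z : ℂ, 0 < z.im → 0 < ((∏ k, (z - lam k)) / (∏ k, (z - mu k))).im)
    (x : ℝ) (h1 : ∀ k, lam k ≠ x) (h2 : ∀ k, mu k ≠ x) :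
    (Finset.univ.filter (fun k => x < mu k)).card ≤ (Finset.univ.filter (fun k => x < lam k)).card ∧
    (Finset.univ.filter (fun k => x < lam k)).card ≤
      (Finset.univ.filter (fun k => x < mu k)).card + 1 := by
  have hb := theta_bound rfl lam mu h
  have ht := (sum_arg_tendsto lam x h1).sub (sum_arg_tendsto mu x h2)
  have hp := Real.pi_pos
  have hlo := ge_of_tendsto ht (b := 0) (by
    filter_upwards [self_mem_nhdsWithin] with t ht
    have ht : 0 < t := ht
    exact (hb (x + t * Complex.I) (by simpa using ht)).1.le)
  have hhi := le_of_tendsto ht (b := Real.pi) (by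
    filter_upwards [self_mem_nhdsWithin] with t ht
    have ht : 0 < t := ht
    exact (hb (x + t * Complex.I) (by simpa using ht)).2.le)
  rw [← mul_sub] at hlo hhi
  constructor
  · have := nonneg_of_mul_nonneg_right hlo hp
    exact_mod_cast sub_nonneg.1 this
  · have h3 := le_of_mul_le_mul_left (hhi.trans_eq (mul_one _).symm) hp
    have h4 := sub_le_iff_le_add'.1 h3
    exact_mod_cast h4

lemma exists_between_avoid {n : ℕ} (lam : Fin (n+1) → ℝ) (mu : Fin n → ℝ) {a b : ℝ} (hab : a < b) :
    ∃ x, a < x ∧ x < b ∧ (∀ k, lam k ≠ x) ∧ ∀ k, mu k ≠ x := by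
  have hinf : (Set.Ioo a b).Infinite := Set.Ioo_infinite hab
  obtain ⟨x, hx, hx2⟩ := hinf.exists_notMem_finite
    ((Set.finite_range lam).union (Set.finite_range mu))
  refine ⟨x, hx.1, hx.2, fun k hk => hx2 (Or.inl ⟨k, hk⟩), fun k hk => hx2 (Or.inr ⟨k, hk⟩)⟩

lemma interlace_of_im {n : ℕ} (lam : Fin (n+1) → ℝ) (mu : Fin n → ℝ)
    (hl : Monotone lam) (hm : Monotone mu)
    (h : ∀ z : ℂ, 0 < z.im → 0 < ((∏ k, (z - lam k)) / (∏ k, (z - mu k))).im) (k : Fin n) :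
    lam k.castSucc ≤ mu k ∧ mu k ≤ lam k.succ := by
  constructor
  · by_contra hlt
    push Not at hlt
    obtain ⟨x, hx1, hx2, hx3, hx4⟩ := exists_between_avoid lam mu hlt
    have hc := (count_bound lam mu h x hx3 hx4).2
    have h1 : (Finset.Ici k.castSucc).card ≤ (Finset.univ.filter (fun j => x < lam j)).card := by
      apply Finset.card_le_card
      intro j hj
      simp only [Finset.mem_filter, Finset.mem_univ, true_and]
      exact hx2.trans_le (hl (Finset.mem_Ici.1 hj))
    have h2 : (Finset.univ.filter (fun j => x < mu j)).card ≤ (Finset.Ioi k).card := by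
      apply Finset.card_le_card
      intro j hj
      simp only [Finset.mem_filter, Finset.mem_univ, true_and] at hj
      rw [Finset.mem_Ioi]
      by_contra hjk
      have := hm (not_lt.1 hjk)
      linarith
    simp at h1 h2
    omega
  · by_contra hlt
    push Not at hlt
    obtain ⟨x, hx1, hx2, hx3, hx4⟩ := exists_between_avoid lam mu hlt
    have hc := (count_bound lam mu h x hx3 hx4).1
    have h1 : (Finset.Ici k).card ≤ (Finset.univ.filter (fun j => x < mu j)).card := by
      apply Finset.card_le_card
      intro j hj
      simp only [Finset.mem_filter, Finset.mem_univ, true_and]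
      exact hx2.trans_le (hm (Finset.mem_Ici.1 hj))
    have h2 : (Finset.univ.filter (fun j => x < lam j)).card ≤ (Finset.Ioi k.succ).card := by
      apply Finset.card_le_card
      intro j hj
      simp only [Finset.mem_filter, Finset.mem_univ, true_and] at hj
      rw [Finset.mem_Ioi]
      by_contra hjk
      have := hl (not_lt.1 hjk)
      linarith
    simp at h1 h2
    omega

end Interlace

/-- Cauchy interlacing for the `r`-characteristic polynomial: for a Hermitian matrix `A`
of size `n+1 ≥ 2`, `χ_r[A]` has `n+1` real roots `λ₁ ≤ ⋯ ≤ λ_{n+1}` (with multiplicity,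
and leading coefficient `r^{n+1}`), `χ_r[A_i]` has `n` real roots `μ₁ ≤ ⋯ ≤ μ_n`, and
`λ_k ≤ μ_k ≤ λ_{k+1}` for all `k`. -/
theorem chir_cauchy_interlacing {n : ℕ} (hn : 1 ≤ n) (r : ℕ) (hr : 1 ≤ r)
    (A : Matrix (Fin (n+1)) (Fin (n+1)) ℂ) (hA : A.IsHermitian) (i : Fin (n+1)) :
    ∃ lam : Fin (n+1) → ℝ, ∃ mu : Fin n → ℝ,
      Monotone lam ∧ Monotone mu ∧
      chir r A
        = Polynomial.C ((r : ℂ)^(n+1)) * ∏ k : Fin (n+1), (Polynomial.X - Polynomial.C ((lam k : ℝ) : ℂ)) ∧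
      chir r (A.submatrix i.succAbove i.succAbove)
        = Polynomial.C ((r : ℂ)^n) * ∏ k : Fin n, (Polynomial.X - Polynomial.C ((mu k : ℝ) : ℂ)) ∧
      ∀ k : Fin n, lam k.castSucc ≤ mu k ∧ mu k ≤ lam k.succ := by

  obtain ⟨lam, hl, hlam⟩ := chir_factor r hr A hA
  obtain ⟨mu, hm, hmu⟩ := chir_factor r hr (A.submatrix i.succAbove i.succAbove)
    (hA.submatrix i.succAbove)
  refine ⟨lam, mu, hl, hm, hlam, hmu, ?_⟩
  apply interlace_of_im lam mu hl hm
  intro z hz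
  have h1 := detr_ratio r hr A hA i z hz
  rw [← chir_eval, ← chir_eval, hlam, hmu] at h1
  simp only [eval_mul, eval_C, eval_prod, eval_sub, eval_X] at h1
  have hr0 : (r : ℂ) ≠ 0 := by exact_mod_cast (by omega : r ≠ 0)
  have hrpos : (0 : ℝ) < r := by exact_mod_cast hr
  rw [mul_div_mul_comm, pow_succ, mul_div_cancel_left₀ _ (pow_ne_zero n hr0)] at h1
  simp only [Complex.mul_im, Complex.natCast_re, Complex.natCast_im, zero_mul, add_zero] at h1
  exact pos_of_mul_pos_right h1 hrpos.le
end

section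
/- Let A be an n×n complex Hermitian positive semidefinite matrix and let r ≥ 1 be an integer. Then for any two subsets S, T ⊆ {1,…,n}, the quantities det_r(A(S)), det_r(A(T)), det_r(A(S∪T)), det_r(A(S∩T)) are nonnegative real numbers and det_r(A(S)) · det_r(A(T)) ≥ det_r(A(S∪T)) · det_r(A(S∩T)). -/
open Polynomial Matrix
open scoped ComplexOrder

/-- The principal submatrix of `A` with rows and columns indexed by `T`. -/
def psub {n : ℕ} (A : Matrix (Fin n) (Fin n) ℂ) (T : Finset (Fin n)) :
    Matrix ↥T ↥T ℂ :=
  A.submatrix (fun x : ↥T => (x : Fin n)) (fun x : ↥T => (x : Fin n))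

def ImPos {ι : Type*} [Fintype ι] (B : Matrix ι ι ℂ) : Prop :=
  ∀ v : ι → ℂ, v ≠ 0 → 0 < (star v ⬝ᵥ B *ᵥ v).im

def Km {ι : Type*} [DecidableEq ι] {r : ℕ} (B : Matrix ι ι ℂ) (f : ι → Fin r)
    (D : Finset ι) : Matrix ι ι ℂ :=
  Matrix.of fun i j => if i ∈ D ∨ j ∈ D then (1 : Matrix ι ι ℂ) i j
    else if f i = f j then B i j else 0

section
variable {ι : Type*} [Fintype ι] [DecidableEq ι] {r : ℕ}

lemma Km_quad (B : Matrix ι ι ℂ) (f : ι → Fin r) (D : Finset ι) (v : ι → ℂ)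
    (hv : ∀ i ∈ D, v i = 0) :
    star v ⬝ᵥ (Km B f D) *ᵥ v =
      ∑ c : Fin r, star (fun i => if f i = c then v i else 0) ⬝ᵥ
        B *ᵥ (fun i => if f i = c then v i else 0) := by
  simp only [dotProduct, mulVec, Finset.mul_sum]
  rw [Finset.sum_comm (s := (Finset.univ : Finset (Fin r)))]
  refine Finset.sum_congr rfl fun i _ => ?_
  rw [Finset.sum_comm (s := (Finset.univ : Finset (Fin r)))]
  refine Finset.sum_congr rfl fun j _ => ?_
  by_cases hi : i ∈ D
  · simp [hv i hi]
  by_cases hj : j ∈ D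
  · simp [hv j hj]
  simp only [Km, Matrix.of_apply, hi, hj, or_self, if_false, Pi.star_apply]
  rw [Finset.sum_eq_single (f i)]
  · by_cases h : f i = f j
    · simp [h]
    · simp [h, Ne.symm h]
  · intro c _ hc
    simp [Ne.symm hc]
  · simp

lemma exists_color (f : ι → Fin r) (v : ι → ℂ) (hv : v ≠ 0) :
    ∃ c : Fin r, (fun i => if f i = c then v i else 0) ≠ 0 := by
  obtain ⟨i, hi⟩ := Function.ne_iff.1 hv
  refine ⟨f i, Function.ne_iff.2 ⟨i, by simpa using hi⟩⟩

lemma Km_det_ne (B : Matrix ι ι ℂ) (hB : ImPos B) (f : ι → Fin r) (D : Finset ι) :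
    (Km B f D).det ≠ 0 := by
  intro h
  obtain ⟨v, hv, h0⟩ := Matrix.exists_mulVec_eq_zero_iff.2 h
  have hD : ∀ i ∈ D, v i = 0 := by
    intro i hi
    have := congrFun h0 i
    simpa [mulVec, dotProduct, Km, hi, Matrix.one_apply] using this
  have hq := Km_quad B f D v hD
  rw [h0, dotProduct_zero] at hq
  have him := congrArg Complex.im hq
  rw [Complex.im_sum] at him
  have : 0 < ∑ c : Fin r, (star (fun i => if f i = c then v i else 0) ⬝ᵥ
        B *ᵥ (fun i => if f i = c then v i else 0)).im := by
    obtain ⟨c, hc⟩ := exists_color f v hv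
    refine Finset.sum_pos' (fun c _ => ?_) ⟨c, Finset.mem_univ _, hB _ hc⟩
    by_cases h : (fun i => if f i = c then v i else 0) = 0
    · rw [h]; simp
    · exact (hB _ h).le
  simp at him
  exact this.ne him

lemma Km_posDef (A : Matrix ι ι ℂ) (hA : A.PosDef) (f : ι → Fin r) :
    (Km A f ∅).PosDef := by
  rw [Matrix.posDef_iff_dotProduct_mulVec]
  constructor
  · ext i j
    have := hA.1.apply i j
    simp only [Km, Matrix.conjTranspose_apply, Matrix.of_apply, Finset.notMem_empty, or_self, if_false]
    by_cases h : f i = f j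
    · simp [h, this]
    · simp [h, Ne.symm h]
  · intro v hv
    rw [Km_quad A f ∅ v (by simp)]
    obtain ⟨c, hc⟩ := exists_color f v hv
    refine Finset.sum_pos' (fun c _ => ?_) ⟨c, Finset.mem_univ _, hA.dotProduct_mulVec_pos hc⟩
    exact hA.posSemidef.dotProduct_mulVec_nonneg _

lemma ImPos.add {B : Matrix ι ι ℂ} (hB : ImPos B) (e : ι) (z : ℂ) (hz : 0 ≤ z.im) :
    ImPos (B + Matrix.single e e z) := by
  intro v hv
  have h := hB v hv
  have h2 : star v ⬝ᵥ (Matrix.single e e z) *ᵥ v = (Complex.normSq (v e) : ℂ) * z := by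
    rw [Matrix.single_mulVec]
    rw [Complex.normSq_eq_conj_mul_self]
    simp [dotProduct, Function.update_apply]
    ring
  rw [add_mulVec, dotProduct_add, h2, Complex.add_im, Complex.im_ofReal_mul]
  have := mul_nonneg (Complex.normSq_nonneg (v e)) hz
  linarith

lemma Km_det_add (B : Matrix ι ι ℂ) (f : ι → Fin r) (D : Finset ι) (e : ι) (he : e ∉ D) (z : ℂ) :
    (Km (B + Matrix.single e e z) f D).det =
      (Km B f D).det + z * (Km B f (insert e D)).det := by
  have h1 : Km (B + Matrix.single e e z) f D =
      (Km B f D).updateRow e ((Km B f D) e + z • (Pi.single e 1 : ι → ℂ)) := by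
    ext i j
    by_cases hi : i = e
    · subst hi
      by_cases hj : j = i
      · subst hj; simp [Km, he]
      · simp [Km, he, Matrix.single_apply, hj, Ne.symm hj]
    · simp [Km, Matrix.updateRow_ne hi, Matrix.single_apply, Ne.symm hi]
  have h2 : ((Km B f D).updateRow e (Pi.single e 1)).det = (Km B f (insert e D)).det := by
    rw [det_apply', det_apply']
    refine Finset.sum_congr rfl fun σ _ => ?_
    congr 1
    by_cases hσ : σ e = e
    · refine Finset.prod_congr rfl fun i _ => ?_
      by_cases hi : i = e
      · subst hi; simp [hσ, Km]
      · have h' : σ i ≠ e := fun h => hi (σ.injective (h.trans hσ.symm))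
        simp [Km, hi, h']
    · have h' : σ⁻¹ e ≠ e := fun h => hσ ((Equiv.Perm.inv_eq_iff_eq.1 h).symm)
      rw [Finset.prod_eq_zero (Finset.mem_univ (σ⁻¹ e)), Finset.prod_eq_zero (Finset.mem_univ (σ⁻¹ e))]
      · rw [show σ (σ⁻¹ e) = e by simp]
        simp only [Km, Matrix.of_apply, Finset.mem_insert_self, true_or, if_true]
        exact Matrix.one_apply_ne (Ne.symm h')
      · rw [show σ (σ⁻¹ e) = e by simp, Matrix.updateRow_self, Pi.single_eq_of_ne h']
  rw [h1, det_updateRow_add, det_updateRow_smul, h2, Matrix.updateRow_eq_self]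

noncomputable def Psi (B : Matrix ι ι ℂ) (D T : Finset ι) (g : ι → Fin r) : ℂ :=
  ∑ f : ι → Fin r with ∀ i, i ∉ T → f i = g i, (Km B f D).det

lemma Psi_insert (B : Matrix ι ι ℂ) (D T : Finset ι) (g : ι → Fin r) (e : ι) (he : e ∉ T) :
    Psi B D (insert e T) g = ∑ c, Psi B D T (Function.update g e c) := by
  unfold Psi
  rw [← Finset.sum_fiberwise _ (fun f => f e)]
  refine Finset.sum_congr rfl fun c _ => ?_
  rw [Finset.filter_filter]
  congr 1
  ext f
  simp only [Finset.mem_filter, Finset.mem_univ, true_and, Finset.mem_insert, Function.update_apply]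
  grind

lemma Psi_empty (B : Matrix ι ι ℂ) (D : Finset ι) (g : ι → Fin r) :
    Psi B D ∅ g = (Km B g D).det := by
  unfold Psi
  rw [Finset.sum_eq_single g]
  · intro f hf hne
    simp at hf
    exact absurd (funext hf) hne
  · simp

lemma Psi_congr (B : Matrix ι ι ℂ) (D T : Finset ι) : ∀ (g g' : ι → Fin r)
    (_ : ∀ i, i ∉ D → g i = g' i), Psi B D T g = Psi B D T g' := by
  induction T using Finset.induction_on with
  | empty =>
    intro g g' h
    rw [Psi_empty, Psi_empty]
    congr 1
    ext i j
    simp only [Km, Matrix.of_apply]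
    grind
  | insert e T he ih =>
    intro g g' h
    rw [Psi_insert _ _ _ _ _ he, Psi_insert _ _ _ _ _ he]
    refine Finset.sum_congr rfl fun c _ => ih _ _ ?_
    intro i hi
    simp [Function.update_apply, h i hi]

lemma Psi_add (B : Matrix ι ι ℂ) (D T : Finset ι) (g : ι → Fin r) (e : ι) (he : e ∉ D) (z : ℂ) :
    Psi (B + Matrix.single e e z) D T g = Psi B D T g + z * Psi B (insert e D) T g := by
  unfold Psi
  rw [Finset.mul_sum, ← Finset.sum_add_distrib]
  exact Finset.sum_congr rfl fun f _ => Km_det_add B f D e he z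

lemma Psi_ne (hr : 1 ≤ r) (T : Finset ι) : ∀ (B : Matrix ι ι ℂ) (_ : ImPos B) (D : Finset ι)
    (g : ι → Fin r), Psi B D T g ≠ 0 := by
  have : NeZero r := ⟨by omega⟩
  induction T using Finset.induction_on with
  | empty =>
    intro B hB D g
    rw [Psi_empty]; exact Km_det_ne B hB g D
  | insert e T he ih =>
    intro B hB D g
    rw [Psi_insert _ _ _ _ _ he]
    by_cases heD : e ∈ D
    · have : ∀ c, Psi B D T (Function.update g e c) = Psi B D T g := by
        intro c
        refine Psi_congr _ _ _ _ _ fun i hi => ?_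
        have : i ≠ e := by rintro rfl; exact hi heD
        simp [this]
      simp [this, ih B hB D g, NeZero.ne]
    · set w := Psi B (insert e D) T g with hw
      have hw0 : w ≠ 0 := ih B hB _ g
      have hc : ∀ c, Psi B (insert e D) T (Function.update g e c) = w := by
        intro c
        refine Psi_congr _ _ _ _ _ fun i hi => ?_
        have : i ≠ e := by rintro rfl; simp at hi
        simp [this]
      have hp : ∀ c, 0 < (Psi B D T (Function.update g e c) / w).im := by
        intro c
        by_contra hneg
        push Not at hneg
        set z := -(Psi B D T (Function.update g e c) / w) with hz
        have hz0 : 0 ≤ z.im := by simp [hz]; exact hneg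
        have := ih (B + Matrix.single e e z) (hB.add e z hz0) D (Function.update g e c)
        rw [Psi_add _ _ _ _ _ heD, hc] at this
        apply this
        rw [hz]; field_simp; ring
      intro h0
      have h1 : (∑ c, Psi B D T (Function.update g e c) / w).im = 0 := by
        rw [← Finset.sum_div, h0]; simp
      rw [Complex.im_sum] at h1
      exact (Finset.sum_pos (fun c _ => hp c) Finset.univ_nonempty).ne' h1

end
section
variable {ι : Type*} [Fintype ι] [DecidableEq ι] {r : ℕ}

lemma exists_rep (σ : Equiv.Perm ι) (c : {c // c ∈ σ.cycleFactorsFinset}) :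
    ∃ a, a ∈ σ.support ∧ σ.cycleOf a = c.1 := by
  obtain ⟨c, hc⟩ := c
  have h1 := (Equiv.Perm.mem_cycleFactorsFinset_iff.1 hc).1
  obtain ⟨a, ha⟩ := h1.nonempty_support
  exact ⟨a, Equiv.Perm.mem_cycleFactorsFinset_support_le hc ha,
    (Equiv.Perm.cycle_is_cycleOf ha hc).symm⟩

lemma card_quot (σ : Equiv.Perm ι) :
    Nat.card (Quotient (Equiv.Perm.SameCycle.setoid σ)) = cycleCount σ := by
  choose a ha hac using exists_rep σ
  let ψ : {c // c ∈ σ.cycleFactorsFinset} ⊕ {x // x ∈ σ.supportᶜ} →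
      Quotient (Equiv.Perm.SameCycle.setoid σ) :=
    Sum.elim (fun c => Quotient.mk _ (a c)) (fun x => Quotient.mk _ x.1)
  have key : ∀ x y, Quotient.mk (Equiv.Perm.SameCycle.setoid σ) x = Quotient.mk _ y ↔
      σ.SameCycle x y := fun x y => Quotient.eq
  have hψ : Function.Bijective ψ := by
    constructor
    · rintro (c | x) (d | y) h
      · simp only [ψ, Sum.elim_inl, key] at h
        congr 1
        apply Subtype.ext
        rw [← hac c, ← hac d, h.cycleOf_eq]
      · simp only [ψ, Sum.elim_inl, Sum.elim_inr, key] at h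
        have h2 := y.2
        simp only [Finset.mem_compl, Equiv.Perm.notMem_support] at h2
        have h3 := ha c
        rw [h.eq_of_right h2, Equiv.Perm.mem_support] at h3
        exact absurd h2 h3
      · simp only [ψ, Sum.elim_inl, Sum.elim_inr, key] at h
        have h2 := x.2
        simp only [Finset.mem_compl, Equiv.Perm.notMem_support] at h2
        have h3 := ha d
        rw [← h.eq_of_left h2, Equiv.Perm.mem_support] at h3
        exact absurd h2 h3
      · simp only [ψ, Sum.elim_inr, key] at h
        have h2 := x.2
        simp only [Finset.mem_compl, Equiv.Perm.notMem_support] at h2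
        congr 1
        exact Subtype.ext (h.eq_of_left h2)
    · intro q
      induction q using Quotient.inductionOn with
      | h x =>
      by_cases hx : x ∈ σ.support
      · let c : {c // c ∈ σ.cycleFactorsFinset} :=
          ⟨σ.cycleOf x, Equiv.Perm.cycleOf_mem_cycleFactorsFinset_iff.2 hx⟩
        refine ⟨Sum.inl c, ?_⟩
        simp only [ψ, Sum.elim_inl, key]
        exact (Equiv.Perm.sameCycle_iff_cycleOf_eq_of_mem_support (ha c) hx).2 (hac c)
      · exact ⟨Sum.inr ⟨x, by simpa using hx⟩, rfl⟩
  rw [← Nat.card_congr (Equiv.ofBijective ψ hψ), Nat.card_sum, Nat.card_eq_fintype_card,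
    Nat.card_eq_fintype_card, Fintype.card_coe, Fintype.card_coe, Finset.card_compl, cycleCount,
    Equiv.Perm.cycleType_def, Multiset.card_map]
  rfl

lemma card_inv (σ : Equiv.Perm ι) :
    (Finset.univ.filter fun f : ι → Fin r => ∀ i, f i = f (σ i)).card = r ^ cycleCount σ := by
  rw [← card_quot, ← Fintype.card_coe, ← Nat.card_eq_fintype_card]
  have hp : r ^ Nat.card (Quotient (Equiv.Perm.SameCycle.setoid σ)) =
      Nat.card (Quotient (Equiv.Perm.SameCycle.setoid σ) → Fin r) := by
    rw [Nat.card_fun, Nat.card_fin]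
  rw [hp]
  have hinv : ∀ f : ι → Fin r, (∀ i, f i = f (σ i)) → ∀ x y, σ.SameCycle x y → f x = f y := by
    intro f hf x y h
    obtain ⟨n, rfl⟩ := h.exists_nat_pow_eq
    induction n with
    | zero => simp
    | succ n ih =>
      rw [ih ⟨n, by simp⟩, pow_succ', Equiv.Perm.mul_apply, ← hf]
  refine Nat.card_congr ⟨fun f => Quotient.lift f.1 (fun x y h => hinv f.1 (Finset.mem_filter.1 f.2).2 x y h),
    fun g => ⟨fun x => g (Quotient.mk _ x), ?_⟩, ?_, ?_⟩
  · simp only [Finset.mem_filter, Finset.mem_univ, true_and]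
    intro i
    congr 1
    apply Quotient.sound
    exact ⟨1, by simp⟩
  · intro f; rfl
  · intro g
    ext q
    induction q using Quotient.inductionOn
    rfl

lemma detr_eq (M : Matrix ι ι ℂ) :
    detr r M = ∑ f : ι → Fin r, (Km M f ∅).det := by
  simp_rw [← Matrix.det_transpose (Km M _ _), Matrix.det_apply']
  rw [Finset.sum_comm]
  unfold detr
  refine Finset.sum_congr rfl fun σ _ => ?_
  rw [← Finset.mul_sum, mul_assoc]
  congr 1
  have : ∀ f : ι → Fin r, ∏ i, (Km M f ∅)ᵀ (σ i) i =
      if ∀ i, f i = f (σ i) then ∏ i, M i (σ i) else 0 := by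
    intro f
    simp only [Km, Matrix.transpose_apply, Matrix.of_apply, Finset.notMem_empty, or_self, if_false]
    rw [Finset.prod_ite_zero]
    simp
  simp_rw [this]
  rw [← Finset.sum_filter, Finset.sum_const, card_inv, nsmul_eq_mul]
  push_cast
  rfl

noncomputable def Phi (r : ℕ) (B : Matrix ι ι ℂ) (D : Finset ι) : ℂ :=
  ∑ f : ι → Fin r, (Km B f D).det

lemma Phi_eq_Psi (B : Matrix ι ι ℂ) (D : Finset ι) (g : ι → Fin r) :
    Phi r B D = Psi B D Finset.univ g := by
  simp [Phi, Psi]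

lemma Phi_ne (hr : 1 ≤ r) (B : Matrix ι ι ℂ) (hB : ImPos B) (D : Finset ι) : Phi r B D ≠ 0 := by
  rw [Phi_eq_Psi B D (fun _ => ⟨0, hr⟩)]
  exact Psi_ne hr _ B hB D _

lemma Phi_add (hr : 1 ≤ r) (B : Matrix ι ι ℂ) (D : Finset ι) (e : ι) (he : e ∉ D) (z : ℂ) :
    Phi r (B + Matrix.single e e z) D = Phi r B D + z * Phi r B (insert e D) := by
  simp only [Phi_eq_Psi _ _ (fun _ => (⟨0, hr⟩ : Fin r))]
  exact Psi_add _ _ _ _ _ he z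

lemma Phi_psub {n : ℕ} (r : ℕ) (A : Matrix (Fin n) (Fin n) ℂ) (S : Finset (Fin n)) :
    Phi r A Sᶜ = (r : ℂ) ^ (Sᶜ).card * detr r (psub A S) := by
  rw [detr_eq]
  have h : ∀ f : Fin n → Fin r, (Km A f Sᶜ).det =
      (Km (psub A S) (fun x : ↥S => f x) ∅).det := by
    intro f
    rw [Matrix.twoBlockTriangular_det _ (fun i => i ∈ S)]
    · have h2 : (Km A f Sᶜ).toSquareBlockProp (fun i => ¬ i ∈ S) = 1 := by
        ext i j
        have := i.2
        simp [Matrix.toSquareBlockProp, Km, Matrix.one_apply, i.2, Subtype.ext_iff]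
      rw [h2, det_one, mul_one]
      have h3 : (Km A f Sᶜ).toSquareBlockProp (fun i => i ∈ S) =
        (Km (psub A S) (fun x : ↥S => f x) ∅) := by
        ext i j
        have := i.2
        simp [Matrix.toSquareBlockProp, Km, psub]
      rw [← h3]
      congr!
    · intro i hi j hj
      have : i ≠ j := by rintro rfl; exact hi hj
      simp [Km, hi, this]
  unfold Phi
  simp_rw [h]
  rw [← Equiv.sum_comp (Equiv.piEquivPiSubtypeProd (fun i => i ∈ S) (fun _ => Fin r)).symm,
    Fintype.sum_prod_type_right]
  have h4 : ∀ (x : {i // ¬ i ∈ S} → Fin r) (y : {i // i ∈ S} → Fin r),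
      (fun k : ↥S => (Equiv.piEquivPiSubtypeProd (fun i => i ∈ S) (fun _ => Fin r)).symm
        (y, x) k) = y := by
    intro x y
    ext k
    simp [Equiv.piEquivPiSubtypeProd]
  simp only [h4]
  rw [Finset.sum_const, Finset.card_univ, Fintype.card_fun, nsmul_eq_mul]
  simp [Finset.card_compl]

lemma local_ineq {n : ℕ} (r : ℕ) (hr : 1 ≤ r) (A : Matrix (Fin n) (Fin n) ℂ) (hA : A.PosSemidef)
    (D : Finset (Fin n)) (i j : Fin n) (hi : i ∉ D) (hj : j ∉ D) (hij : i ≠ j) :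
    0 ≤ ((Phi r A D + Complex.I * Phi r A (insert i D)) *
      star (Phi r A (insert j D) + Complex.I * Phi r A (insert i (insert j D)))).im := by
  let F : ℝ → ℂ := fun ε => 
    let B := A + (Complex.I * ε) • (1 : Matrix (Fin n) (Fin n) ℂ)
    (Phi r B D + Complex.I * Phi r B (insert i D)) *
      star (Phi r B (insert j D) + Complex.I * Phi r B (insert i (insert j D)))
  have hPc : ∀ D, Continuous fun ε : ℝ =>
      Phi r (A + (Complex.I * ε) • (1 : Matrix (Fin n) (Fin n) ℂ)) D := by
    intro D
    unfold Phi
    refine continuous_finsetSum _ fun f _ => ?_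
    refine Continuous.matrix_det ?_
    refine continuous_matrix fun k l => ?_
    simp only [Km, Matrix.of_apply]
    split_ifs
    · fun_prop
    · simp only [Matrix.add_apply, Matrix.smul_apply]
      fun_prop
    · fun_prop
  have hF : Continuous fun ε => (F ε).im := by
    have h1 := hPc D
    have h2 := hPc (insert i D)
    have h3 := hPc (insert j D)
    have h4 := hPc (insert i (insert j D))
    simp only [F]
    fun_prop
  have hF0 : F 0 = (Phi r A D + Complex.I * Phi r A (insert i D)) *
      star (Phi r A (insert j D) + Complex.I * Phi r A (insert i (insert j D))) := by
    simp [F]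
  rw [← hF0]
  have hpos : ∀ ε : ℝ, 0 < ε → 0 ≤ (F ε).im := by
    intro ε hε
    have hB : ImPos (A + (Complex.I * ε) • (1 : Matrix (Fin n) (Fin n) ℂ)) := by
      intro v hv
      have h1 := hA.dotProduct_mulVec_nonneg v
      have h2 : 0 < star v ⬝ᵥ v := by
        simpa using (Matrix.PosDef.one (R := ℂ) (n := Fin n)).dotProduct_mulVec_pos hv
      rw [add_mulVec, dotProduct_add, smul_mulVec, one_mulVec, dotProduct_smul, smul_eq_mul,
        Complex.add_im]
      rw [Complex.le_def] at h1
      rw [Complex.lt_def] at h2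
      have := mul_pos hε h2.1
      simp at h1 h2 this ⊢
      rw [← h1.2]
      simpa using this
    simp only [F]
    set B := A + (Complex.I * ε) • (1 : Matrix (Fin n) (Fin n) ℂ)
    set w := Phi r B (insert j D) + Complex.I * Phi r B (insert i (insert j D)) with hw
    set u := Phi r B D + Complex.I * Phi r B (insert i D) with hu
    by_cases hw0 : w = 0
    · simp [hw0]
    by_contra hneg
    push Not at hneg
    have hy : (u * star w) = (u / w) * (Complex.normSq w : ℂ) := by
      rw [Complex.normSq_eq_conj_mul_self]
      field_simp
      simp
    rw [hy, Complex.im_mul_ofReal] at hneg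
    have hn : 0 < Complex.normSq w := Complex.normSq_pos.2 hw0
    have him : (u / w).im < 0 := by
      by_contra h; push Not at h
      exact absurd (mul_nonneg h hn.le) (not_le.2 hneg)
    refine Phi_ne hr _ ((hB.add i Complex.I (by simp)).add j (-(u / w)) (by simpa using him.le)) D ?_
    rw [Phi_add hr _ _ _ hj, Phi_add hr _ _ _ hi, Phi_add hr _ _ _ (by simp [hi, hij]), ← hu, ← hw]
    field_simp
    ring
  have : Filter.Tendsto (fun ε => (F ε).im) (nhdsWithin 0 (Set.Ioi 0)) (nhds (F 0).im) :=
    (hF.tendsto 0).mono_left nhdsWithin_le_nhds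
  exact ge_of_tendsto this (Filter.eventually_of_mem self_mem_nhdsWithin hpos)

lemma detr_pos (hr : 1 ≤ r) (A : Matrix ι ι ℂ) (hA : A.PosDef) : 0 < detr r A := by
  have : NeZero r := ⟨by omega⟩
  rw [detr_eq]
  exact Finset.sum_pos (fun f _ => (Km_posDef A hA f).det_pos) Finset.univ_nonempty

lemma psub_pos {n : ℕ} (hr : 1 ≤ r) (A : Matrix (Fin n) (Fin n) ℂ) (hA : A.PosDef)
    (S : Finset (Fin n)) : 0 < detr r (psub A S) :=
  detr_pos hr _ (hA.submatrix Subtype.val_injective)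

lemma local_ineq2 {n : ℕ} (hr : 1 ≤ r) (A : Matrix (Fin n) (Fin n) ℂ) (hA : A.PosDef)
    (R : Finset (Fin n)) (i j : Fin n) (hi : i ∉ R) (hj : j ∉ R) (hij : i ≠ j) :
    (detr r (psub A (insert i (insert j R)))).re * (detr r (psub A R)).re ≤
    (detr r (psub A (insert i R))).re * (detr r (psub A (insert j R))).re := by
  have hreal : ∀ S, detr r (psub A S) = ((detr r (psub A S)).re : ℂ) := by
    intro S
    have := psub_pos hr A hA S
    rw [Complex.lt_def] at this
    exact Complex.ext (by simp) (by simpa using this.2.symm)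
  have h := local_ineq r hr A hA.posSemidef (insert i (insert j R))ᶜ i j (by simp) (by simp) hij
  have e1 : insert i (insert i (insert j R))ᶜ = (insert j R)ᶜ := by ext x; simp; grind
  have e2 : insert j (insert i (insert j R))ᶜ = (insert i R)ᶜ := by ext x; simp; grind
  have e3 : insert i (insert i R)ᶜ = Rᶜ := by ext x; simp; grind
  set D := (insert i (insert j R))ᶜ with hD
  have c1 : (insert j R)ᶜ.card = D.card + 1 := by
    rw [← e1, Finset.card_insert_of_notMem]; simp [hD]
  have c2 : (insert i R)ᶜ.card = D.card + 1 := by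
    rw [← e2, Finset.card_insert_of_notMem]; simp [hD]
  have c3 : Rᶜ.card = D.card + 2 := by
    rw [← e3, Finset.card_insert_of_notMem, c2]; simp
  rw [e1, e2, e3, hD, Phi_psub, Phi_psub, Phi_psub, Phi_psub, ← hD, c1, c2, c3,
    hreal (insert i (insert j R)), hreal (insert i R), hreal (insert j R), hreal R] at h
  generalize (detr r (psub A (insert i (insert j R)))).re = a at *
  generalize (detr r (psub A (insert i R))).re = c at *
  generalize (detr r (psub A (insert j R))).re = b at *
  generalize (detr r (psub A R)).re = d at *
  have h2 : 0 ≤ ((r : ℝ) ^ (2 * D.card + 2)) * (b * c - a * d) := by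
    refine h.trans_eq ?_
    have : ∀ k : ℕ, ((r : ℂ) ^ k) = (((r : ℝ) ^ k : ℝ) : ℂ) := by intro k; push_cast; rfl
    simp only [this]
    simp only [← Complex.ofReal_mul]
    simp only [Complex.mul_im, Complex.mul_re, Complex.add_im, Complex.add_re, Complex.star_def,
      Complex.conj_re, Complex.conj_im, Complex.ofReal_re, Complex.ofReal_im, Complex.I_re,
      Complex.I_im]
    ring
  have h3 : (0 : ℝ) < (r : ℝ) ^ (2 * D.card + 2) := by positivity
  have := nonneg_of_mul_nonneg_right h2 h3
  linarith

lemma lattice {α : Type*} [DecidableEq α] (f : Finset α → ℝ) (hf : ∀ S, 0 < f S)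
    (h : ∀ R i j, i ∉ R → j ∉ R → i ≠ j →
      f (insert i (insert j R)) * f R ≤ f (insert i R) * f (insert j R)) (S T : Finset α) :
    f (S ∪ T) * f (S ∩ T) ≤ f S * f T := by
  have step1 : ∀ U R : Finset α, ∀ i, i ∉ R ∪ U → Disjoint R U →
      f (insert i (R ∪ U)) * f R ≤ f (R ∪ U) * f (insert i R) := by
    intro U R i
    induction U using Finset.induction_on with
    | empty => intro _ _; simp [mul_comm]
    | insert j U hj ih =>
      intro hi hd
      have hd' : Disjoint R U := by
        rw [Finset.disjoint_insert_right] at hd; exact hd.2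
      have hjR : j ∉ R := by rw [Finset.disjoint_insert_right] at hd; exact hd.1
      have hi' : i ∉ R ∪ U := by simp at hi ⊢; tauto
      have ih := ih hi' hd'
      have hl := h (R ∪ U) i j hi' (by simp [hj, hjR]) (by rintro rfl; simp at hi)
      rw [Finset.union_insert]
      have p1 := hf (R ∪ U)
      have p2 := hf R
      have p3 := hf (insert j (R ∪ U))
      refine le_of_mul_le_mul_right ?_ p1
      nlinarith [mul_le_mul_of_nonneg_right hl p2.le, mul_le_mul_of_nonneg_left ih p3.le]
  have step2 : ∀ U V R : Finset α, Disjoint R U → Disjoint V (R ∪ U) →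
      f ((R ∪ U) ∪ V) * f R ≤ f (R ∪ U) * f (R ∪ V) := by
    intro U V R hRU
    induction V using Finset.induction_on with
    | empty => intro _; simp
    | insert i V hi ih =>
      intro hd
      rw [Finset.disjoint_insert_left] at hd
      have ih := ih hd.2
      have hdd := hd.2
      rw [Finset.disjoint_union_right] at hdd
      have hh := hd.1
      rw [Finset.mem_union, not_or] at hh
      have s := step1 U (R ∪ V) i (by simp; tauto)
        (by rw [Finset.disjoint_union_left]; exact ⟨hRU, hdd.2⟩)
      have e : R ∪ V ∪ U = R ∪ U ∪ V := by ext x; simp; tauto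
      rw [e] at s
      rw [Finset.union_insert, Finset.union_insert]
      have p1 := hf (R ∪ V)
      have p2 := hf R
      have p3 := hf (R ∪ U ∪ V)
      have p4 := hf (insert i (R ∪ V))
      refine le_of_mul_le_mul_right ?_ p1
      nlinarith [mul_le_mul_of_nonneg_right s p2.le, mul_le_mul_of_nonneg_left ih p4.le]
  have := step2 (S \ T) (T \ S) (S ∩ T)
    (by rw [Finset.disjoint_left]; simp; tauto) (by rw [Finset.disjoint_left]; simp; tauto)
  have e1 : S ∩ T ∪ S \ T = S := by ext x; simp; tauto
  have e2 : S ∩ T ∪ T \ S = T := by ext x; simp; tauto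
  have e3 : S ∪ T \ S = S ∪ T := by ext x; simp
  rwa [e1, e2, e3] at this

end

/-- Hadamard–Fischer–Koteljanskii-type inequality for the `r`-determinant of a positive
semidefinite matrix: all the principal `r`-determinants are nonnegative reals and
`det_r(A(S)) det_r(A(T)) ≥ det_r(A(S∪T)) det_r(A(S∩T))`. -/
theorem detr_koteljanskii {n : ℕ} (r : ℕ) (hr : 1 ≤ r)
    (A : Matrix (Fin n) (Fin n) ℂ) (hA : A.PosSemidef) (S T : Finset (Fin n)) :
    ((detr r (psub A S)).im = 0 ∧ 0 ≤ (detr r (psub A S)).re) ∧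
    ((detr r (psub A T)).im = 0 ∧ 0 ≤ (detr r (psub A T)).re) ∧
    ((detr r (psub A (S ∪ T))).im = 0 ∧ 0 ≤ (detr r (psub A (S ∪ T))).re) ∧
    ((detr r (psub A (S ∩ T))).im = 0 ∧ 0 ≤ (detr r (psub A (S ∩ T))).re) ∧
    (detr r (psub A (S ∪ T))).re * (detr r (psub A (S ∩ T))).re ≤
      (detr r (psub A S)).re * (detr r (psub A T)).re := by
  let B : ℝ → Matrix (Fin n) (Fin n) ℂ := fun ε => A + (ε : ℂ) • 1
  have hB : ∀ ε : ℝ, 0 < ε → (B ε).PosDef := by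
    intro ε hε
    exact Matrix.PosDef.posSemidef_add hA (Matrix.PosDef.one.smul (by exact_mod_cast hε))
  have hc : ∀ S, Continuous fun ε => detr r (psub (B ε) S) := by
    intro S
    simp only [detr, psub, B, Matrix.submatrix_apply, Matrix.add_apply, Matrix.smul_apply]
    fun_prop
  have hB0 : B 0 = A := by simp [B]
  have lim : ∀ S, Filter.Tendsto (fun ε => detr r (psub (B ε) S)) (nhdsWithin 0 (Set.Ioi 0))
      (nhds (detr r (psub A S))) := by
    intro S
    have := ((hc S).tendsto 0).mono_left (nhdsWithin_le_nhds (s := Set.Ioi 0))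
    rwa [hB0] at this
  have limre : ∀ S, Filter.Tendsto (fun ε => (detr r (psub (B ε) S)).re)
      (nhdsWithin 0 (Set.Ioi 0)) (nhds (detr r (psub A S)).re) := fun S =>
    (Complex.continuous_re.tendsto _).comp (lim S)
  have limim : ∀ S, Filter.Tendsto (fun ε => (detr r (psub (B ε) S)).im)
      (nhdsWithin 0 (Set.Ioi 0)) (nhds (detr r (psub A S)).im) := fun S =>
    (Complex.continuous_im.tendsto _).comp (lim S)
  have hpos : ∀ S, (detr r (psub A S)).im = 0 ∧ 0 ≤ (detr r (psub A S)).re := by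
    intro S
    constructor
    · refine tendsto_nhds_unique (limim S) (tendsto_const_nhds.congr' ?_)
      refine Filter.eventually_of_mem self_mem_nhdsWithin fun ε hε => ?_
      exact (Complex.lt_def.1 (psub_pos hr (B ε) (hB ε hε) S)).2
    · refine ge_of_tendsto (limre S) ?_
      refine Filter.eventually_of_mem self_mem_nhdsWithin fun ε hε => ?_
      exact (Complex.lt_def.1 (psub_pos hr (B ε) (hB ε hε) S)).1.le
  refine ⟨hpos S, hpos T, hpos _, hpos _, ?_⟩
  refine le_of_tendsto_of_tendsto ((limre _).mul (limre _)) ((limre _).mul (limre _)) ?_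
  refine Filter.eventually_of_mem self_mem_nhdsWithin fun ε hε => ?_
  exact lattice (fun S => (detr r (psub (B ε) S)).re)
    (fun S => (Complex.lt_def.1 (psub_pos hr (B ε) (hB ε hε) S)).1)
    (fun R i j hi hj hij => local_ineq2 hr (B ε) (hB ε hε) R i j hi hj hij) S T
end

section
/- Let A be an n×n complex Hermitian matrix, let p(z₁,…,z_n) = det(Z − A)² ∈ ℝ[z₁,…,z_n] where Z = diag(z₁,…,z_n), and let z ∈ ℝ^n be a point such that the real matrix Z − A (with Z = diag(z)) is positive definite (equivalently, z is above the roots of p). Set δ := min_{1 ≤ i ≤ n} 1/(4·((Z − A)^{-1})_{ii}). Then z − δ·(1,…,1) is above the roots of ∂ⁿp/∂z₁⋯∂z_n, i.e. (∂ⁿp/∂z₁⋯∂z_n)(z − δ·(1,…,1) + t) ≠ 0 for every t ∈ ℝ^n with all coordinates ≥ 0. -/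
open Polynomial Matrix
open scoped ComplexOrder

/-- The formal partial derivative `∂/∂zᵢ` as a linear endomorphism of `ℂ[z₁,…,z_n]`. -/
noncomputable def pd {n : ℕ} (i : Fin n) :
    MvPolynomial (Fin n) ℂ →ₗ[ℂ] MvPolynomial (Fin n) ℂ :=
  (MvPolynomial.pderiv i).toLinearMap

/-- The matrix `Z - A`, where `Z = diag(z₁,…,z_n)` is the diagonal matrix of indeterminates. -/
noncomputable def ZsubA {n : ℕ} (A : Matrix (Fin n) (Fin n) ℂ) :
    Matrix (Fin n) (Fin n) (MvPolynomial (Fin n) ℂ) :=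
  Matrix.of fun i j => (if i = j then MvPolynomial.X i else 0) - MvPolynomial.C (A i j)

noncomputable def Mt {n : ℕ} (A : Matrix (Fin n) (Fin n) ℂ) (T : Finset (Fin n)) (w : Fin n → ℂ) :
    Matrix (Fin n) (Fin n) ℂ :=
  Matrix.of fun i k => if i ∈ T then (if i = k then 1 else 0) else (if i = k then w i else 0) - A i k

noncomputable def mm {n : ℕ} (A : Matrix (Fin n) (Fin n) ℂ) (T : Finset (Fin n)) (w : Fin n → ℂ) : ℂ :=
  (Mt A T w).det

noncomputable def FF {n : ℕ} (A : Matrix (Fin n) (Fin n) ℂ) (S T : Finset (Fin n)) (w : Fin n → ℂ) : ℂ :=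
  ∑ U ∈ S.powerset, mm A (T ∪ U) w * mm A (T ∪ (S \ U)) w

lemma mm_affine {n : ℕ} (A : Matrix (Fin n) (Fin n) ℂ) (T : Finset (Fin n)) (w : Fin n → ℂ)
    (j : Fin n) (hj : j ∉ T) (s : ℂ) :
    mm A T (w + Pi.single j s) = mm A T w + s * mm A (insert j T) w := by
  have h1 : Mt A T (w + Pi.single j s)
      = (Mt A T w).updateRow j ((Mt A T w) j + s • (Pi.single j 1 : Fin n → ℂ)) := by
    ext i k
    by_cases hi : i = j
    · subst hi
      by_cases hk : i = k
      · subst hk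
        simp [Mt, hj]
        try ring
      · simp [Mt, hj, hk, Pi.single_apply, Ne.symm hk]
    · simp [Mt, hi, Pi.single_apply]
  have h2 : (Mt A T w).updateRow j (Pi.single j 1 : Fin n → ℂ) = Mt A (insert j T) w := by
    ext i k
    by_cases hi : i = j
    · subst hi
      simp [Mt, Pi.single_apply, eq_comm]
    · simp [Mt, hi]
  unfold mm
  rw [h1, Matrix.det_updateRow_add, Matrix.det_updateRow_smul, h2, Matrix.updateRow_eq_self]

lemma mm_const {n : ℕ} (A : Matrix (Fin n) (Fin n) ℂ) (T : Finset (Fin n)) (w : Fin n → ℂ)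
    (j : Fin n) (hj : j ∈ T) (s : ℂ) :
    mm A T (w + Pi.single j s) = mm A T w := by
  unfold mm
  congr 1
  ext i k
  by_cases hi : i = j
  · subst hi
    simp [Mt, hj]
  · simp [Mt, hi, Pi.single_apply]

lemma FF_taylor {n : ℕ} (A : Matrix (Fin n) (Fin n) ℂ) (S T : Finset (Fin n)) (w : Fin n → ℂ)
    (j : Fin n) (hS : j ∉ S) (hT : j ∉ T) (s : ℂ) :
    FF A S T (w + Pi.single j s)
      = FF A S T w + s * FF A (insert j S) T w + s ^ 2 * FF A S (insert j T) w := by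
  unfold FF
  rw [Finset.sum_powerset_insert hS, ← Finset.sum_add_distrib, Finset.mul_sum, Finset.mul_sum,
    ← Finset.sum_add_distrib, ← Finset.sum_add_distrib]
  refine Finset.sum_congr rfl fun U hU => ?_
  have hUS : U ⊆ S := Finset.mem_powerset.1 hU
  have hjU : j ∉ U := fun h => hS (hUS h)
  rw [mm_affine A (T ∪ U) w j (by simp [hT, hjU]), mm_affine A (T ∪ (S \ U)) w j (by simp [hT, hS])]
  have e1 : T ∪ (insert j S \ U) = insert j (T ∪ (S \ U)) := by
    rw [Finset.insert_sdiff_of_notMem _ hjU, Finset.union_insert]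
  have e2 : insert j S \ insert j U = S \ U := by
    rw [Finset.insert_sdiff_insert, Finset.sdiff_insert_of_notMem hS]
  rw [e1, e2, Finset.union_insert, Finset.insert_union, Finset.insert_union]
  ring

lemma FF_deriv_diag {n : ℕ} (A : Matrix (Fin n) (Fin n) ℂ) (S T : Finset (Fin n)) (w : Fin n → ℂ)
    (j : Fin n) (hS : j ∉ S) (hT : j ∉ T) (s : ℂ) :
    FF A (insert j S) T (w + Pi.single j s)
      = FF A (insert j S) T w + 2 * s * FF A S (insert j T) w := by
  have h1 := FF_taylor A S T (w + Pi.single j s) j hS hT 1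
  have h2 := FF_taylor A S T w j hS hT (s + 1)
  have h3 := FF_taylor A S T w j hS hT s
  have h4 : FF A S (insert j T) (w + Pi.single j s) = FF A S (insert j T) w := by
    unfold FF
    refine Finset.sum_congr rfl fun U hU => ?_
    rw [mm_const _ _ _ _ (by simp), mm_const _ _ _ _ (by simp)]
  rw [add_assoc, ← Pi.single_add, h2, h3, h4] at h1
  linear_combination -h1

lemma mm_continuous {n : ℕ} (A : Matrix (Fin n) (Fin n) ℂ) (T : Finset (Fin n)) :
    Continuous (mm A T) := by
  unfold mm
  refine Continuous.matrix_det ?_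
  refine continuous_matrix fun i k => ?_
  unfold Mt
  simp only [Matrix.of_apply]
  split_ifs <;> fun_prop

lemma FF_continuous {n : ℕ} (A : Matrix (Fin n) (Fin n) ℂ) (S T : Finset (Fin n)) :
    Continuous (FF A S T) := by
  unfold FF
  have := mm_continuous A
  fun_prop

lemma mm_ne_zero {n : ℕ} (A : Matrix (Fin n) (Fin n) ℂ) (hA : A.IsHermitian) (T : Finset (Fin n))
    (w : Fin n → ℂ) (hw : ∀ i, 0 < (w i).im) : mm A T w ≠ 0 := by
  intro h
  obtain ⟨v, hv, hMv⟩ := Matrix.exists_mulVec_eq_zero_iff.2 h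
  apply hv
  have hT : ∀ i ∈ T, v i = 0 := by
    intro i hi
    have := congrFun hMv i
    simpa [Matrix.mulVec, dotProduct, Mt, hi] using this
  have hN : ∀ i, star (v i) * (w i * v i - (A *ᵥ v) i) = 0 := by
    intro i
    by_cases hi : i ∈ T
    · simp [hT i hi]
    · have := congrFun hMv i
      simp only [Matrix.mulVec, dotProduct, Mt, hi, Matrix.of_apply, if_false, sub_mul,
        Finset.sum_sub_distrib] at this
      simp at this
      simp only [Matrix.mulVec, dotProduct]
      rw [this, mul_zero]
  have hsum : ∑ i, (star (v i) * (w i * v i)) - star v ⬝ᵥ (A *ᵥ v) = 0 := by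
    rw [dotProduct, ← Finset.sum_sub_distrib]
    refine Finset.sum_eq_zero fun i _ => ?_
    rw [Pi.star_apply, ← mul_sub]; exact hN i
  have him : (star v ⬝ᵥ (A *ᵥ v)).im = 0 := hA.im_star_dotProduct_mulVec_self v
  have h2 := congrArg Complex.im hsum
  rw [Complex.sub_im, him, sub_zero, Complex.im_sum] at h2
  have h3 : ∀ i, (star (v i) * (w i * v i)).im = (w i).im * Complex.normSq (v i) := by
    intro i
    simp [Complex.normSq_apply]; ring
  simp only [h3, Complex.zero_im] at h2
  rw [Finset.sum_eq_zero_iff_of_nonneg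
    (fun i _ => mul_nonneg (hw i).le (Complex.normSq_nonneg _))] at h2
  ext i
  have := h2 i (Finset.mem_univ i)
  rcases mul_eq_zero.1 this with h | h
  · exact absurd h (hw i).ne'
  · simpa using h

lemma mm_block {n : ℕ} (A : Matrix (Fin n) (Fin n) ℂ) (T : Finset (Fin n)) (w : Fin n → ℂ) :
    mm A T w = ((Matrix.diagonal w - A).submatrix (fun i : {i // i ∉ T} => (i : Fin n))
      (fun i : {i // i ∉ T} => (i : Fin n))).det := by
  unfold mm
  rw [Matrix.twoBlockTriangular_det (Mt A T w) (fun i => i ∉ T)]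
  · have h1 : (Mt A T w).toSquareBlockProp (fun i => ¬ i ∉ T) = 1 := by
      ext i k
      have hi : (i : Fin n) ∈ T := not_not.1 i.2
      simp [Matrix.toSquareBlockProp, Mt, hi, Matrix.one_apply, Subtype.ext_iff]
    rw [h1, Matrix.det_one, mul_one]
    congr 1
    ext i k
    have hi : (i : Fin n) ∉ T := i.2
    simp [Matrix.toSquareBlockProp, Mt, hi, Matrix.diagonal_apply]
  · intro i hi j hj
    have hi : (i : Fin n) ∈ T := not_not.1 hi
    have : i ≠ j := fun h => hj (h ▸ hi)
    simp [Mt, hi, this]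

lemma mm_pos {n : ℕ} (A : Matrix (Fin n) (Fin n) ℂ) (T : Finset (Fin n)) (w : Fin n → ℂ)
    (h : (Matrix.diagonal w - A).PosDef) : 0 < mm A T w := by
  rw [mm_block]
  exact (h.submatrix Subtype.val_injective).det_pos

lemma mm_nonneg {n : ℕ} (A : Matrix (Fin n) (Fin n) ℂ) (T : Finset (Fin n)) (w : Fin n → ℂ)
    (h : (Matrix.diagonal w - A).PosSemidef) : 0 ≤ mm A T w := by
  rw [mm_block]
  exact (h.submatrix _).det_nonneg

lemma mm_real {n : ℕ} (A : Matrix (Fin n) (Fin n) ℂ) (hA : A.IsHermitian) (T : Finset (Fin n))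
    (x : Fin n → ℝ) : (mm A T (fun i => (x i : ℂ))).im = 0 := by
  rw [mm_block]
  have h : (Matrix.diagonal (fun i => (x i : ℂ)) - A).IsHermitian := by
    refine Matrix.IsHermitian.sub ?_ hA
    rw [Matrix.isHermitian_diagonal_iff]
    intro i
    simp [IsSelfAdjoint]
  have h2 := h.submatrix (fun i : {i // i ∉ T} => (i : Fin n))
  have h3 := congrArg Matrix.det h2.eq
  rw [Matrix.det_conjTranspose] at h3
  exact Complex.conj_eq_iff_im.1 h3

lemma FF_real {n : ℕ} (A : Matrix (Fin n) (Fin n) ℂ) (hA : A.IsHermitian) (S T : Finset (Fin n))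
    (x : Fin n → ℝ) : (FF A S T (fun i => (x i : ℂ))).im = 0 := by
  unfold FF
  rw [Complex.im_sum]
  refine Finset.sum_eq_zero fun U _ => ?_
  simp [Complex.mul_im, mm_real A hA]

lemma FF_ne_zero {n : ℕ} (A : Matrix (Fin n) (Fin n) ℂ) (hA : A.IsHermitian) (S : Finset (Fin n)) :
    ∀ (T : Finset (Fin n)) (_ : Disjoint S T) (w : Fin n → ℂ) (_ : ∀ i, 0 < (w i).im),
      FF A S T w ≠ 0 := by
  induction S using Finset.induction_on with
  | empty =>
    intro T _ w hw
    have := mm_ne_zero A hA T w hw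
    simp [FF, this]
  | insert j S hj ih =>
    intro T hd w hw hb
    rw [Finset.disjoint_insert_left] at hd
    have ha : FF A S (insert j T) w ≠ 0 :=
      ih _ (by rw [Finset.disjoint_insert_right]; exact ⟨hj, hd.2⟩) w hw
    obtain ⟨r, hr⟩ := IsAlgClosed.exists_eq_mul_self (-(FF A S T w) / FF A S (insert j T) w)
    have key : ∀ s : ℂ, 0 ≤ s.im → s * s ≠ -(FF A S T w) / FF A S (insert j T) w := by
      intro s hs h
      have h1 := FF_taylor A S T w j hj hd.1 s
      rw [hb, pow_two, h, div_mul_cancel₀ _ ha] at h1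
      refine ih T hd.2 (w + Pi.single j s) ?_ (by rw [h1]; ring)
      intro i
      by_cases hi : i = j
      · subst hi
        have := hw i
        simp only [Pi.add_apply, Pi.single_eq_same, Complex.add_im]
        linarith
      · simpa [Pi.single_apply, hi] using hw i
    rcases le_total 0 r.im with h | h
    · exact key r h hr.symm
    · exact key (-r) (by simpa using h) (by rw [hr]; ring)

lemma im_quad (a b c : ℂ) (ha : a ≠ 0) (h : ∀ s : ℂ, 0 ≤ s.im → c + s * b + s ^ 2 * a ≠ 0) :
    (b * star c).im ≤ 0 := by
  obtain ⟨d, hd⟩ := IsAlgClosed.exists_eq_mul_self (b ^ 2 - 4 * a * c)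
  obtain ⟨r, hr⟩ : ∃ r, r = (-b + d) / (2 * a) := ⟨_, rfl⟩
  obtain ⟨r', hr'⟩ : ∃ r, r = (-b - d) / (2 * a) := ⟨_, rfl⟩
  have hb : b = -a * (r + r') := by rw [hr, hr']; field_simp; ring
  have hc : c = a * (r * r') := by
    rw [hr, hr']; field_simp; linear_combination -hd
  have h1 : r.im ≤ 0 := by
    by_contra hcon
    exact h r (not_le.1 hcon).le (by rw [hb, hc]; ring)
  have h2 : r'.im ≤ 0 := by
    by_contra hcon
    exact h r' (not_le.1 hcon).le (by rw [hb, hc]; ring)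
  have e : (b * star c).im =
      Complex.normSq a * (Complex.normSq r * r'.im + Complex.normSq r' * r.im) := by
    rw [hb, hc]
    simp [Complex.normSq_apply]
    ring
  rw [e]
  have n1 := Complex.normSq_nonneg a
  have n2 := Complex.normSq_nonneg r
  have n3 := Complex.normSq_nonneg r'
  exact mul_nonpos_of_nonneg_of_nonpos n1
    (add_nonpos (mul_nonpos_of_nonneg_of_nonpos n2 h2) (mul_nonpos_of_nonneg_of_nonpos n3 h1))

lemma FF_im {n : ℕ} (A : Matrix (Fin n) (Fin n) ℂ) (hA : A.IsHermitian) (S T : Finset (Fin n))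
    (hd : Disjoint S T) (j : Fin n) (hS : j ∉ S) (hT : j ∉ T)
    (w : Fin n → ℂ) (hw : ∀ i, 0 ≤ (w i).im) :
    (FF A (insert j S) T w * star (FF A S T w)).im ≤ 0 := by
  have open_case : ∀ w : Fin n → ℂ, (∀ i, 0 < (w i).im) →
      (FF A (insert j S) T w * star (FF A S T w)).im ≤ 0 := by
    intro w hw
    refine im_quad (FF A S (insert j T) w) _ _ ?_ ?_
    · exact FF_ne_zero A hA S _ (by rw [Finset.disjoint_insert_right]; exact ⟨hS, hd⟩) w hw
    · intro s hs
      rw [← FF_taylor A S T w j hS hT s]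
      refine FF_ne_zero A hA S T hd _ ?_
      intro i
      by_cases hi : i = j
      · subst hi
        have := hw i
        simp only [Pi.add_apply, Pi.single_eq_same, Complex.add_im]
        linarith
      · simpa [Pi.single_apply, hi] using hw i
  let g : ℝ → ℝ := fun η =>
    (FF A (insert j S) T (fun i => w i + η * Complex.I)
      * star (FF A S T (fun i => w i + η * Complex.I))).im
  have hg : Continuous g := by
    have h1 := FF_continuous A (insert j S) T
    have h2 := FF_continuous A S T
    have h3 : Continuous (fun η : ℝ => (fun i => w i + η * Complex.I : Fin n → ℂ)) := by fun_prop
    exact Complex.continuous_im.comp ((h1.comp h3).mul (continuous_star.comp (h2.comp h3)))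
  have h0 : Filter.Tendsto g (nhdsWithin 0 (Set.Ioi 0)) (nhds (g 0)) :=
    hg.continuousAt.tendsto.mono_left nhdsWithin_le_nhds
  have hle : g 0 ≤ 0 := by
    refine le_of_tendsto h0 ?_
    filter_upwards [self_mem_nhdsWithin] with η hη
    apply open_case
    intro i
    have := hw i
    have hη' : 0 < η := hη
    simp
    linarith
  simpa [g] using hle

lemma small_eps (P K : ℝ) (h : ∀ ε : ℝ, 0 < ε → ε * P ≤ ε * (ε ^ 2 * K)) : P ≤ 0 := by
  by_contra hP
  push Not at hP
  have hpos : 0 < P / (2 * (|K| + 1)) := by positivity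
  have h1 := le_of_mul_le_mul_left (h _ (Real.sqrt_pos.2 hpos)) (Real.sqrt_pos.2 hpos)
  rw [Real.sq_sqrt hpos.le] at h1
  have h2 : P / (2 * (|K| + 1)) * K ≤ P / (2 * (|K| + 1)) * (|K| + 1) := by
    gcongr
    linarith [le_abs_self K]
  have h3 : P / (2 * (|K| + 1)) * (|K| + 1) = P / 2 := by
    have : |K| + 1 ≠ 0 := by positivity
    field_simp
  linarith

noncomputable def fr {n : ℕ} (A : Matrix (Fin n) (Fin n) ℂ) (S T : Finset (Fin n))
    (x : Fin n → ℝ) : ℝ := (FF A S T (fun i => (x i : ℂ))).re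

lemma FF_ofReal {n : ℕ} (A : Matrix (Fin n) (Fin n) ℂ) (hA : A.IsHermitian) (S T : Finset (Fin n))
    (x : Fin n → ℝ) : FF A S T (fun i => (x i : ℂ)) = (fr A S T x : ℂ) := by
  apply Complex.ext
  · simp [fr]
  · simp [FF_real A hA]

lemma fr_taylor {n : ℕ} (A : Matrix (Fin n) (Fin n) ℂ) (hA : A.IsHermitian) (S T : Finset (Fin n))
    (x : Fin n → ℝ) (j : Fin n) (hS : j ∉ S) (hT : j ∉ T) (s : ℝ) :
    fr A S T (x + Pi.single j s)
      = fr A S T x + s * fr A (insert j S) T x + s ^ 2 * fr A S (insert j T) x := by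
  have h := FF_taylor A S T (fun i => (x i : ℂ)) j hS hT s
  have e : ((fun i => (x i : ℂ)) + Pi.single j (s : ℂ) : Fin n → ℂ)
      = fun i => (((x + Pi.single j s : Fin n → ℝ) i : ℝ) : ℂ) := by
    ext i
    by_cases hi : i = j
    · subst hi; simp
    · simp [Pi.single_apply, hi]
  rw [e] at h
  simp only [FF_ofReal A hA] at h
  exact_mod_cast h

lemma fr_deriv_diag {n : ℕ} (A : Matrix (Fin n) (Fin n) ℂ) (hA : A.IsHermitian)
    (S T : Finset (Fin n))
    (x : Fin n → ℝ) (j : Fin n) (hS : j ∉ S) (hT : j ∉ T) (s : ℝ) :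
    fr A (insert j S) T (x + Pi.single j s)
      = fr A (insert j S) T x + 2 * s * fr A S (insert j T) x := by
  have h := FF_deriv_diag A S T (fun i => (x i : ℂ)) j hS hT s
  have e : ((fun i => (x i : ℂ)) + Pi.single j (s : ℂ) : Fin n → ℂ)
      = fun i => (((x + Pi.single j s : Fin n → ℝ) i : ℝ) : ℂ) := by
    ext i
    by_cases hi : i = j
    · subst hi; simp
    · simp [Pi.single_apply, hi]
  rw [e] at h
  simp only [FF_ofReal A hA] at h
  exact_mod_cast h

lemma up_point {n : ℕ} (x : Fin n → ℝ) (j : Fin n) (ε : ℝ) (hε : 0 < ε) (i : Fin n) :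
    0 ≤ (((fun i => (x i : ℂ)) + Pi.single j (ε * Complex.I) : Fin n → ℂ) i).im := by
  by_cases hi : i = j
  · subst hi; simp [hε.le]
  · simp [Pi.single_apply, hi]

lemma fr_rayleigh {n : ℕ} (A : Matrix (Fin n) (Fin n) ℂ) (hA : A.IsHermitian)
    (S T : Finset (Fin n)) (hd : Disjoint S T)
    (x : Fin n → ℝ) (i j : Fin n) (hij : i ≠ j) (hiS : i ∉ S) (hiT : i ∉ T)
    (hS : j ∉ S) (hT : j ∉ T) :
    fr A (insert j (insert i S)) T x * fr A S T x
      ≤ fr A (insert j S) T x * fr A (insert i S) T x := by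
  have key := small_eps (fr A (insert j (insert i S)) T x * fr A S T x
      - fr A (insert j S) T x * fr A (insert i S) T x)
      (fr A (insert j (insert i S)) T x * fr A S (insert j T) x
      - fr A (insert j S) T x * fr A (insert i S) (insert j T) x) ?_
  · linarith
  · intro ε hε
    have h := FF_im A hA S T hd i hiS hiT _ (up_point x j ε hε)
    rw [FF_taylor A S T _ j hS hT, FF_taylor A (insert i S) T _ j (by simp [hS, hij.symm]) hT] at h
    simp only [FF_ofReal A hA] at h
    simp [pow_two] at h
    linarith

lemma fr_disc {n : ℕ} (A : Matrix (Fin n) (Fin n) ℂ) (hA : A.IsHermitian)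
    (S T : Finset (Fin n)) (hd : Disjoint S T)
    (x : Fin n → ℝ) (j : Fin n) (hS : j ∉ S) (hT : j ∉ T) :
    2 * fr A S (insert j T) x * fr A S T x ≤ fr A (insert j S) T x ^ 2 := by
  have key := small_eps (2 * fr A S (insert j T) x * fr A S T x - fr A (insert j S) T x ^ 2)
      (2 * fr A S (insert j T) x ^ 2) ?_
  · linarith
  · intro ε hε
    have h := FF_im A hA S T hd j hS hT _ (up_point x j ε hε)
    rw [FF_taylor A S T _ j hS hT, FF_deriv_diag A S T _ j hS hT] at h
    simp only [FF_ofReal A hA] at h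
    simp [pow_two] at h
    linarith

lemma fr_const {n : ℕ} (A : Matrix (Fin n) (Fin n) ℂ) (hA : A.IsHermitian)
    (S T : Finset (Fin n))
    (x : Fin n → ℝ) (j : Fin n) (hS : j ∉ S) (hT : j ∉ T) (s : ℝ) :
    fr A S (insert j T) (x + Pi.single j s) = fr A S (insert j T) x := by
  have h1 := fr_taylor A hA S T (x + Pi.single j s) j hS hT 1
  have h2 := fr_taylor A hA S T x j hS hT (s + 1)
  have h3 := fr_taylor A hA S T x j hS hT s
  have h4 := fr_deriv_diag A hA S T x j hS hT s
  rw [add_assoc, ← Pi.single_add, h2, h3, h4] at h1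
  linear_combination -h1

lemma fr_disc4 {n : ℕ} (A : Matrix (Fin n) (Fin n) ℂ) (hA : A.IsHermitian)
    (S T : Finset (Fin n)) (hd : Disjoint S T)
    (x : Fin n → ℝ) (j : Fin n) (hS : j ∉ S) (hT : j ∉ T) (ha : 0 < fr A S (insert j T) x) :
    4 * fr A S (insert j T) x * fr A S T x ≤ fr A (insert j S) T x ^ 2 := by
  have h := fr_disc A hA S T hd
    (x + Pi.single j (-(fr A (insert j S) T x / (2 * fr A S (insert j T) x)))) j hS hT
  rw [fr_const A hA S T x j hS hT, fr_taylor A hA S T x j hS hT, fr_deriv_diag A hA S T x j hS hT] at h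
  generalize fr A S (insert j T) x = a at *
  generalize fr A S T x = c at *
  generalize fr A (insert j S) T x = b at *
  field_simp at h
  nlinarith

lemma real_step (a b c a' b' c' δ : ℝ) (ha : 0 < a) (hb : 0 < b) (hc : 0 < c) (hδ : 0 < δ)
    (h1 : 2 * δ * b ≤ c) (h2 : 4 * a * c ≤ b ^ 2)
    (hR : ∀ y : ℝ, (b' - 2 * a' * y) * (c - b * y + a * y ^ 2)
      ≤ (b - 2 * a * y) * (c' - b' * y + a' * y ^ 2)) :
    (b' - 2 * a' * δ) * c ≤ c' * (b - 2 * a * δ) := by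
  have hk : 0 < b - 2 * δ * a := by
    by_contra hcon
    push Not at hcon
    nlinarith [mul_pos ha hδ]
  -- discriminant of `k y² - 2 c y + 2 δ c`
  obtain ⟨D, hD⟩ : ∃ D, D = Real.sqrt (c ^ 2 - 2 * δ * c * (b - 2 * δ * a)) := ⟨_, rfl⟩
  have hD0 : 0 ≤ c ^ 2 - 2 * δ * c * (b - 2 * δ * a) := by
    have : 0 ≤ c * (c - 2 * δ * b) := mul_nonneg hc.le (by linarith)
    nlinarith [mul_pos (mul_pos hδ hδ) (mul_pos hc ha)]
  have hDs : D ^ 2 = c ^ 2 - 2 * δ * c * (b - 2 * δ * a) := by rw [hD, Real.sq_sqrt hD0]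
  have hDn : 0 ≤ D := by rw [hD]; exact Real.sqrt_nonneg _
  obtain ⟨y, hy⟩ : ∃ y, y = 2 * δ * c / (c + D) := ⟨_, rfl⟩
  have hcD : 0 < c + D := by linarith
  have hyc : y * (c + D) = 2 * δ * c := by rw [hy]; field_simp
  have hy0 : 0 < y := by rw [hy]; positivity
  have hy2 : y ≤ 2 * δ := by
    rw [hy, div_le_iff₀ hcD]
    nlinarith
  have hq : (b - 2 * δ * a) * y ^ 2 - 2 * c * y + 2 * δ * c = 0 := by
    have hmul : ((b - 2 * δ * a) * y ^ 2 - 2 * c * y + 2 * δ * c) * (c + D) ^ 2 = 0 := by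
      have : (b - 2 * δ * a) * (y * (c + D)) ^ 2 - 2 * c * (y * (c + D)) * (c + D)
          + 2 * δ * c * (c + D) ^ 2 = 0 := by
        rw [hyc]
        linear_combination 2 * δ * c * hDs
      linear_combination this
    rcases mul_eq_zero.1 hmul with h | h
    · exact h
    · exact absurd h (by positivity)
  have hay : a * y ^ 2 < c := by
    have e1 : a * y ^ 2 ≤ a * (2 * δ) ^ 2 := by gcongr
    have e2 : (2 * δ * b) ^ 2 ≤ c ^ 2 := by gcongr
    have e3 : (2 * δ) ^ 2 * (4 * a * c) ≤ (2 * δ) ^ 2 * b ^ 2 := by gcongr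
    have e4 : 4 * (a * (2 * δ) ^ 2) * c ≤ c * c := by nlinarith
    have e5 := le_of_mul_le_mul_right e4 hc
    linarith
  have hRy := hR y
  have hfin : ((b' - 2 * a' * δ) * c - c' * (b - 2 * a * δ)) * (c - a * y ^ 2) ≤ 0 := by
    have : ((b' - 2 * a' * δ) * c - c' * (b - 2 * a * δ)) * (c - a * y ^ 2)
      = c * ((b' - 2 * a' * y) * (c - b * y + a * y ^ 2)
        - (b - 2 * a * y) * (c' - b' * y + a' * y ^ 2)) := by
      linear_combination (-(a' * c - a * c')) * hq
    rw [this]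
    exact mul_nonpos_of_nonneg_of_nonpos hc.le (by linarith)
  by_contra hcon
  push Not at hcon
  have := mul_pos (sub_pos.2 hcon) (sub_pos.2 hay)
  linarith

/-- The barrier step. -/
lemma barrier_step {n : ℕ} (A : Matrix (Fin n) (Fin n) ℂ) (hA : A.IsHermitian)
    (S : Finset (Fin n)) (w : Fin n → ℝ) (δ : ℝ) (hδ : 0 < δ) (j : Fin n) (hS : j ∉ S)
    (H : ∀ T, Disjoint S T → ∀ t : Fin n → ℝ, (∀ k, 0 ≤ t k) →
      0 < fr A S T (w + t) ∧
      ∀ i, i ∉ S → i ∉ T → 2 * δ * fr A (insert i S) T (w + t) ≤ fr A S T (w + t)) :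
    ∀ T, Disjoint (insert j S) T → ∀ t : Fin n → ℝ, (∀ k, 0 ≤ t k) →
      0 < fr A (insert j S) T ((w + Pi.single j (-δ)) + t) ∧
      ∀ i, i ∉ insert j S → i ∉ T →
        2 * δ * fr A (insert i (insert j S)) T ((w + Pi.single j (-δ)) + t)
          ≤ fr A (insert j S) T ((w + Pi.single j (-δ)) + t) := by
  intro T hd t ht
  rw [Finset.disjoint_insert_left] at hd
  obtain ⟨hT, hd⟩ := hd
  have hp : (w + Pi.single j (-δ)) + t = (w + t) + Pi.single j (-δ) := by abel
  rw [hp]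
  obtain ⟨hc, hbar⟩ := H T hd t ht
  have hd' : Disjoint S (insert j T) := by
    rw [Finset.disjoint_insert_right]; exact ⟨hS, hd⟩
  obtain ⟨ha, -⟩ := H (insert j T) hd' t ht
  have hdisc := fr_disc4 A hA S T hd (w + t) j hS hT ha
  have hbar1 := hbar j hS hT
  have hb : 0 < fr A (insert j S) T (w + t) := by
    by_contra hcon
    push Not at hcon
    obtain ⟨s, hs⟩ : ∃ s, s = -(fr A (insert j S) T (w + t)) / (2 * fr A S (insert j T) (w + t)) :=
      ⟨_, rfl⟩
    have hs0 : 0 ≤ s := by rw [hs]; exact div_nonneg (by linarith) (by linarith)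
    have hpos := (H T hd (t + Pi.single j s) (by
      intro k
      by_cases hk : k = j
      · subst hk
        have := ht k
        simp; linarith
      · simpa [Pi.single_apply, hk] using ht k)).1
    rw [← add_assoc, fr_taylor A hA S T _ j hS hT] at hpos
    have e : s * (2 * fr A S (insert j T) (w + t)) = -(fr A (insert j S) T (w + t)) := by
      rw [hs]; field_simp
    nlinarith
  have hpos : 0 < fr A (insert j S) T (w + t) - 2 * fr A S (insert j T) (w + t) * δ := by
    by_contra hcon
    push Not at hcon
    nlinarith [mul_pos ha hδ]
  have e1 : fr A (insert j S) T (w + t + Pi.single j (-δ))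
      = fr A (insert j S) T (w + t) - 2 * fr A S (insert j T) (w + t) * δ := by
    rw [fr_deriv_diag A hA S T _ j hS hT]; ring
  refine ⟨by rw [e1]; exact hpos, ?_⟩
  intro i hi hiT
  rw [Finset.mem_insert, not_or] at hi
  obtain ⟨hij, hiS⟩ := hi
  have hji : j ∉ insert i S := by simp [hS, Ne.symm hij]
  have hbi := hbar i hiS hiT
  have e2 : fr A (insert i (insert j S)) T (w + t + Pi.single j (-δ))
      = fr A (insert j (insert i S)) T (w + t) - 2 * fr A (insert i S) (insert j T) (w + t) * δ := by
    rw [Finset.insert_comm, fr_deriv_diag A hA (insert i S) T _ j hji hT]; ring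
  rw [e1, e2]
  have hstep := real_step _ _ _ (fr A (insert i S) (insert j T) (w + t))
    (fr A (insert j (insert i S)) T (w + t)) (fr A (insert i S) T (w + t)) δ ha hb hc hδ hbar1 hdisc ?_
  · generalize fr A (insert j (insert i S)) T (w + t)
      - 2 * fr A (insert i S) (insert j T) (w + t) * δ = p at *
    generalize fr A (insert j S) T (w + t) - 2 * fr A S (insert j T) (w + t) * δ = q at *
    have h1 : (2 * δ * p) * fr A S T (w + t) ≤ q * fr A S T (w + t) := by
      have h2 : 2 * δ * (p * fr A S T (w + t)) ≤ 2 * δ * (fr A (insert i S) T (w + t) * q) := by gcongr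
      have h3 : (2 * δ * fr A (insert i S) T (w + t)) * q ≤ fr A S T (w + t) * q := by gcongr
      linarith
    exact le_of_mul_le_mul_right h1 hc
  · intro y
    have h := fr_rayleigh A hA S T hd (w + t + Pi.single j (-y)) i j hij hiS hiT hS hT
    rw [fr_deriv_diag A hA S T _ j hS hT, fr_deriv_diag A hA (insert i S) T _ j hji hT,
      fr_taylor A hA S T _ j hS hT, fr_taylor A hA (insert i S) T _ j hji hT] at h
    linarith

lemma hasDerivAt_pderiv {n : ℕ} (p : MvPolynomial (Fin n) ℂ) (w : Fin n → ℂ) (j : Fin n) :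
    HasDerivAt (fun s : ℂ => MvPolynomial.eval (w + Pi.single j s) p)
      (MvPolynomial.eval w (MvPolynomial.pderiv j p)) 0 := by
  induction p using MvPolynomial.induction_on with
  | C a => simpa using hasDerivAt_const (0 : ℂ) a
  | add p q hp hq =>
    simp only [map_add]
    exact hp.add hq
  | mul_X p i hp =>
    have hX : HasDerivAt (fun s : ℂ => (w + Pi.single j s : Fin n → ℂ) i)
        ((Pi.single i 1 : Fin n → ℂ) j) 0 := by
      by_cases hi : i = j
      · subst hi
        simpa using (hasDerivAt_id (0 : ℂ)).const_add (w i)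
      · simpa [Pi.single_apply, hi, Ne.symm hi] using hasDerivAt_const (0 : ℂ) (w i)
    have h := hp.mul hX
    simp only [map_mul, MvPolynomial.eval_X]
    refine h.congr_deriv ?_
    simp only [Derivation.leibniz, MvPolynomial.pderiv_X, smul_eq_mul, map_add, map_mul,
      MvPolynomial.eval_X, Pi.single_zero, add_zero]
    by_cases hi : i = j
    · subst hi; simp; ring
    · simp [Pi.single_apply, hi, Ne.symm hi]; ring

lemma eval_list {n : ℕ} (A : Matrix (Fin n) (Fin n) ℂ) (l : List (Fin n)) (hl : l.Nodup) :
    ∀ w : Fin n → ℂ, MvPolynomial.eval w (((l.map (fun i : Fin n => pd i)).prod) ((ZsubA A).det ^ 2))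
      = FF A l.toFinset ∅ w := by
  induction l with
  | nil =>
    intro w
    have : MvPolynomial.eval w (ZsubA A).det = mm A ∅ w := by
      rw [RingHom.map_det]
      unfold mm
      congr 1
      ext i k
      by_cases hik : i = k
      · subst hik; simp [ZsubA, Mt]
      · simp [ZsubA, Mt, hik]
    simp [FF, this, pow_two]
  | cons j l ih =>
    intro w
    rw [List.nodup_cons] at hl
    have ih := ih hl.2
    rw [List.map_cons, List.prod_cons, Module.End.mul_apply, List.toFinset_cons]
    have h1 := hasDerivAt_pderiv (((l.map (fun i : Fin n => pd i)).prod) ((ZsubA A).det ^ 2)) w j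
    have hj : j ∉ l.toFinset := by simpa using hl.1
    simp only [ih, FF_taylor A l.toFinset ∅ w j hj (by simp)] at h1
    have h2 : HasDerivAt (fun s : ℂ => FF A l.toFinset ∅ w + s * FF A (insert j l.toFinset) ∅ w
        + s ^ 2 * FF A l.toFinset (insert j ∅) w) (FF A (insert j l.toFinset) ∅ w) 0 := by
      have ha := (hasDerivAt_id (0 : ℂ)).mul_const (FF A (insert j l.toFinset) ∅ w)
      have hb := (hasDerivAt_pow 2 (0 : ℂ)).mul_const (FF A l.toFinset (insert j ∅) w)
      have hc := (ha.const_add (FF A l.toFinset ∅ w)).add hb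
      refine hc.congr_deriv ?_
      simp
    exact h1.unique h2

lemma schur_psd {n : ℕ} (B : Matrix (Fin n) (Fin n) ℂ) (hB : B.PosDef) (i : Fin n) (r : ℝ)
    (hr : 0 < r) (h : r * (B⁻¹ i i).re ≤ 1) :
    (B - Matrix.diagonal (Pi.single i (r : ℂ))).PosSemidef := by
  have hg : ((B⁻¹ i i).re : ℂ) = B⁻¹ i i := by
    have := hB.inv.isHermitian.apply i i
    exact Complex.conj_eq_iff_re.1 this
  obtain ⟨E, hE⟩ : ∃ E : Matrix (Fin n) Unit ℂ, E = Matrix.of fun k _ => if k = i then 1 else 0 :=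
    ⟨_, rfl⟩
  obtain ⟨D, hD⟩ : ∃ D : Matrix Unit Unit ℂ, D = Matrix.diagonal fun _ => ((r⁻¹ : ℝ) : ℂ) := ⟨_, rfl⟩
  have hDpos : D.PosDef := by
    rw [hD, Matrix.posDef_diagonal_iff]
    intro _
    exact_mod_cast inv_pos.2 hr
  have hDinv : D⁻¹ = Matrix.diagonal fun _ => (r : ℂ) := by
    apply Matrix.inv_eq_right_inv
    rw [hD, Matrix.diagonal_mul_diagonal]
    ext a b
    simp [hr.ne']
  have : Invertible B := hB.isUnit.invertible
  have : Invertible D := hDpos.isUnit.invertible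
  have h1 := (Matrix.PosDef.fromBlocks₁₁ E D hB).2 (by
    have : D - Eᴴ * B⁻¹ * E = Matrix.diagonal fun _ => ((r⁻¹ - (B⁻¹ i i).re : ℝ) : ℂ) := by
      ext a b
      simp [hD, hE, Matrix.mul_apply, hg]
    rw [this, Matrix.posSemidef_diagonal_iff]
    intro _
    have h3 : (B⁻¹ i i).re ≤ r⁻¹ := by
      rw [inv_eq_one_div r, le_div_iff₀ hr]; linarith
    exact_mod_cast sub_nonneg.2 h3)
  have h2 := (Matrix.PosDef.fromBlocks₂₂ B E hDpos).1 h1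
  have h3 : Matrix.diagonal (Pi.single i (r : ℂ)) = E * D⁻¹ * Eᴴ := by
    ext a b
    rw [hDinv]
    by_cases hab : a = b
    · subst hab
      by_cases hai : a = i
      · subst hai; simp [hE, Matrix.mul_apply]
      · simp [hE, Matrix.mul_apply, hai]
    · by_cases hai : a = i
      · subst hai; simp [hE, Matrix.mul_apply, hab, Ne.symm hab]
      · simp [hE, Matrix.mul_apply, hab, hai]
  rw [h3]
  exact h2

lemma FF_empty {n : ℕ} (A : Matrix (Fin n) (Fin n) ℂ) (T : Finset (Fin n)) (w : Fin n → ℂ) :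
    FF A ∅ T w = mm A T w * mm A T w := by
  simp [FF]

lemma FF_single {n : ℕ} (A : Matrix (Fin n) (Fin n) ℂ) (T : Finset (Fin n)) (w : Fin n → ℂ)
    (i : Fin n) : FF A (insert i ∅) T w = 2 * mm A T w * mm A (insert i T) w := by
  unfold FF
  rw [Finset.sum_powerset_insert (by simp)]
  simp [Finset.union_insert]
  ring

lemma base_case {n : ℕ} (A : Matrix (Fin n) (Fin n) ℂ) (hA : A.IsHermitian) (z : Fin n → ℝ)
    (hpd : (Matrix.diagonal (fun i => (z i : ℂ)) - A).PosDef) (δ : ℝ) (hδ : 0 < δ)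
    (hle : ∀ i, 4 * δ * (((Matrix.diagonal (fun m => (z m : ℂ)) - A)⁻¹ i i).re) ≤ 1) :
    ∀ T, Disjoint ∅ T → ∀ t : Fin n → ℝ, (∀ k, 0 ≤ t k) →
      0 < fr A ∅ T (z + t) ∧
      ∀ i, i ∉ (∅ : Finset (Fin n)) → i ∉ T →
        2 * δ * fr A (insert i ∅) T (z + t) ≤ fr A ∅ T (z + t) := by
  intro T _ t ht
  have hdt : (Matrix.diagonal (fun i => (t i : ℂ))).PosSemidef := by
    rw [Matrix.posSemidef_diagonal_iff]
    intro i
    exact_mod_cast ht i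
  have hP : (Matrix.diagonal (fun i => (((z + t) i : ℝ) : ℂ)) - A).PosDef := by
    have := hpd.add_posSemidef hdt
    convert this using 1
    rw [sub_add_eq_add_sub, Matrix.diagonal_add]
    simp
  have hm : ∀ T, mm A T (fun i => (((z + t) i : ℝ) : ℂ))
      = ((mm A T (fun i => (((z + t) i : ℝ) : ℂ))).re : ℂ) := by
    intro T
    apply Complex.ext
    · simp
    · rw [mm_real A hA]; simp
  have hmpos : ∀ T, 0 < (mm A T (fun i => (((z + t) i : ℝ) : ℂ))).re := by
    intro T
    have := mm_pos A T _ hP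
    exact (Complex.pos_iff.1 this).1
  have e1 : fr A ∅ T (z + t) = (mm A T (fun i => (((z + t) i : ℝ) : ℂ))).re
      * (mm A T (fun i => (((z + t) i : ℝ) : ℂ))).re := by
    unfold fr
    rw [FF_empty, hm T]
    simp
  refine ⟨by rw [e1]; exact mul_pos (hmpos T) (hmpos T), ?_⟩
  intro i _ hiT
  have e2 : fr A (insert i ∅) T (z + t) = 2 * (mm A T (fun i => (((z + t) i : ℝ) : ℂ))).re
      * (mm A (insert i T) (fun i => (((z + t) i : ℝ) : ℂ))).re := by
    unfold fr
    rw [FF_single, hm T, hm (insert i T)]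
    simp
  have hps : (Matrix.diagonal ((fun i => (((z + t) i : ℝ) : ℂ))
      + Pi.single i ((-(4 * δ) : ℝ) : ℂ)) - A).PosSemidef := by
    have := (schur_psd _ hpd i (4 * δ) (by positivity) (hle i)).add hdt
    convert this using 1
    ext a b
    by_cases hab : a = b
    · subst hab
      by_cases hai : a = i
      · subst hai; simp; ring
      · simp [hai]; ring
    · simp [hab]
  have hnn := (Complex.nonneg_iff.1 (mm_nonneg A T _ hps)).1
  rw [mm_affine A T _ i hiT, hm T, hm (insert i T)] at hnn
  have hnn' : 0 ≤ (mm A T (fun i => (((z + t) i : ℝ) : ℂ))).re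
      - 4 * δ * (mm A (insert i T) (fun i => (((z + t) i : ℝ) : ℂ))).re := by
    have h5 : ∀ x y r : ℝ, ((x : ℂ) + (r : ℂ) * (y : ℂ)).re = x + r * y := by
      intro x y r; simp
    rw [h5] at hnn
    linarith
  rw [e1, e2]
  have := mul_nonneg (hmpos T).le hnn'
  linarith

lemma main_inv {n : ℕ} (A : Matrix (Fin n) (Fin n) ℂ) (hA : A.IsHermitian) (z : Fin n → ℝ)
    (hpd : (Matrix.diagonal (fun i => (z i : ℂ)) - A).PosDef) (δ : ℝ) (hδ : 0 < δ)
    (hle : ∀ i, 4 * δ * (((Matrix.diagonal (fun m => (z m : ℂ)) - A)⁻¹ i i).re) ≤ 1)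
    (S : Finset (Fin n)) :
    ∀ T, Disjoint S T → ∀ t : Fin n → ℝ, (∀ k, 0 ≤ t k) →
      0 < fr A S T ((z + ∑ k ∈ S, Pi.single k (-δ)) + t) ∧
      ∀ i, i ∉ S → i ∉ T →
        2 * δ * fr A (insert i S) T ((z + ∑ k ∈ S, Pi.single k (-δ)) + t)
          ≤ fr A S T ((z + ∑ k ∈ S, Pi.single k (-δ)) + t) := by
  induction S using Finset.induction_on with
  | empty => simpa using base_case A hA z hpd δ hδ hle
  | insert j S hj ih =>
    have e : z + ∑ k ∈ insert j S, (Pi.single k (-δ) : Fin n → ℝ)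
        = (z + ∑ k ∈ S, Pi.single k (-δ)) + Pi.single j (-δ) := by
      rw [Finset.sum_insert hj]; abel
    rw [e]
    exact barrier_step A hA S _ δ hδ j hj ih

/-- For Hermitian `A` and `p = det(Z-A)²`, if `z ∈ ℝ^n` makes `Z - A` positive definite
then, with `δ = min_i 1/(4((Z-A)^{-1})_{ii})`, the point `z - δ(1,…,1)` is above the roots
of `∂ⁿp/∂z₁⋯∂z_n`. -/
theorem mixed_derivative_above_roots {n : ℕ} (hn : 0 < n)
    (A : Matrix (Fin n) (Fin n) ℂ) (hA : A.IsHermitian)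
    (z : Fin n → ℝ)
    (hpd : (Matrix.diagonal (fun i => (z i : ℂ)) - A).PosDef) :
    ∀ t : Fin n → ℝ, (∀ k, 0 ≤ t k) →
      MvPolynomial.eval
        (fun k => ((z k
            - Finset.univ.inf' (Finset.univ_nonempty_iff.mpr ⟨⟨0, hn⟩⟩)
                (fun i => 1 / (4 * (((Matrix.diagonal (fun m => (z m : ℂ)) - A)⁻¹ i i).re)))
            + t k : ℝ) : ℂ))
        (((List.ofFn (fun i : Fin n => pd i)).prod) ((ZsubA A).det ^ 2)) ≠ 0 := by
  intro t ht
  generalize hδdef : Finset.univ.inf' (Finset.univ_nonempty_iff.mpr ⟨⟨0, hn⟩⟩)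
    (fun i => 1 / (4 * (((Matrix.diagonal (fun m => (z m : ℂ)) - A)⁻¹ i i).re))) = δ
  have hg : ∀ i, 0 < ((Matrix.diagonal (fun m => (z m : ℂ)) - A)⁻¹ i i).re := fun i =>
    (Complex.pos_iff.1 (hpd.inv.diag_pos (i := i))).1
  have hδ : 0 < δ := by
    rw [← hδdef, Finset.lt_inf'_iff]
    intro i _
    have := hg i
    positivity
  have hle : ∀ i, 4 * δ * (((Matrix.diagonal (fun m => (z m : ℂ)) - A)⁻¹ i i).re) ≤ 1 := by
    intro i
    have h1 : δ ≤ 1 / (4 * (((Matrix.diagonal (fun m => (z m : ℂ)) - A)⁻¹ i i).re)) := by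
      rw [← hδdef]
      exact Finset.inf'_le _ (Finset.mem_univ i)
    have := hg i
    rw [le_div_iff₀ (by positivity)] at h1
    linarith
  rw [List.ofFn_eq_map, eval_list A _ (List.nodup_finRange n), List.toFinset_finRange]
  have hpos := (main_inv A hA z hpd δ hδ hle Finset.univ ∅ (by simp) t ht).1
  have e : (z + ∑ k, (Pi.single k (-δ) : Fin n → ℝ)) + t = fun k => z k - δ + t k := by
    ext k
    simp [Finset.sum_apply, Pi.single_apply]
    ring
  rw [e] at hpos
  rw [FF_ofReal A hA]
  exact_mod_cast hpos.ne'
end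

section
/- Let A be an n×n complex Hermitian matrix and let b ∈ ℝ with b strictly greater than the largest eigenvalue of A (so bI − A is positive definite). Then every real root x of the r = 2 characteristic polynomial χ₂[A] satisfies x ≤ b − min_{1 ≤ i ≤ n} 1/(4·((bI − A)^{-1})_{ii}). -/
open Polynomial Matrix

namespace ChirTwo

section Ops
variable {ι : Type*} [DecidableEq ι] {R : Type*} [Field R]

/-- Central difference in direction `i` (the partial derivative on quadratics). -/
def Dd (i : ι) (f : (ι → R) → R) : (ι → R) → R :=
  fun z => (f (z + Pi.single i 1) - f (z + Pi.single i (-1))) / 2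

/-- Half the second central difference in direction `i`. -/
def Ee (i : ι) (f : (ι → R) → R) : (ι → R) → R :=
  fun z => (f (z + Pi.single i 1) + f (z + Pi.single i (-1))) / 2 - f z

/-- `f` is quadratic in each variable. -/
def Quad (f : (ι → R) → R) : Prop :=
  ∀ i z w, f (z + Pi.single i w) = f z + w * Dd i f z + w ^ 2 * Ee i f z

def EL (L : List ι) (f : (ι → R) → R) : (ι → R) → R := L.foldr Ee f
def DL (L : List ι) (f : (ι → R) → R) : (ι → R) → R := L.foldr Dd f

theorem Dd_comm (i j : ι) (f : (ι → R) → R) : Dd i (Dd j f) = Dd j (Dd i f) := by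
  funext z
  simp only [Dd, add_right_comm z (Pi.single i _) (Pi.single j _)]
  ring

theorem Dd_Ee (i j : ι) (f : (ι → R) → R) : Dd i (Ee j f) = Ee j (Dd i f) := by
  funext z
  simp only [Dd, Ee, add_right_comm z (Pi.single i _) (Pi.single j _)]
  ring

theorem Dd_EL (i : ι) (L : List ι) (f : (ι → R) → R) : Dd i (EL L f) = EL L (Dd i f) := by
  induction L with
  | nil => rfl
  | cons j L ih =>
    change Dd i (Ee j (EL L f)) = Ee j (EL L (Dd i f))
    rw [Dd_Ee, ih]

theorem Quad.Dd {f : (ι → R) → R} (h : Quad f) (j : ι) : Quad (Dd j f) := by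
  intro i z w
  have h1 := h i (z + Pi.single j 1) w
  have h2 := h i (z + Pi.single j (-1)) w
  rw [Dd_comm i j f, ← Dd_Ee]
  simp only [ChirTwo.Dd] at *
  rw [add_right_comm z (Pi.single i w), add_right_comm z (Pi.single i w), h1, h2]
  ring

theorem Quad.Ee {f : (ι → R) → R} (h : Quad f) (j : ι) : Quad (Ee j f) := by
  intro i z w
  have h1 := h i (z + Pi.single j 1) w
  have h2 := h i (z + Pi.single j (-1)) w
  have h0 := h i z w
  rw [Dd_Ee]
  simp only [ChirTwo.Dd, ChirTwo.Ee, add_right_comm z (Pi.single i _) (Pi.single j _)] at *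
  rw [h1, h2, h0]
  ring

theorem Quad.EL {f : (ι → R) → R} (h : Quad f) (L : List ι) : Quad (EL L f) := by
  induction L with
  | nil => exact h
  | cons j L ih => exact ih.Ee j

theorem Quad.Dd_shift [CharZero R] {f : (ι → R) → R} (h : Quad f) (i : ι) (z : ι → R) (w : R) :
    ChirTwo.Dd i f (z + Pi.single i w) = ChirTwo.Dd i f z + 2 * w * ChirTwo.Ee i f z := by
  have e1 : z + Pi.single i w + Pi.single i 1 = z + Pi.single i (w + 1) := by
    rw [add_assoc, ← Pi.single_add]
  have e2 : z + Pi.single i w + Pi.single i (-1) = z + Pi.single i (w + -1) := by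
    rw [add_assoc, ← Pi.single_add]
  have : ChirTwo.Dd i f (z + Pi.single i w) =
      (f (z + Pi.single i (w+1)) - f (z + Pi.single i (w + -1))) / 2 := by
    rw [← e1, ← e2]; rfl
  rw [this, h, h]
  field_simp
  ring

theorem Quad.Dd_Dd [CharZero R] {f : (ι → R) → R} (h : Quad f) (i : ι) (z : ι → R) :
    ChirTwo.Dd i (ChirTwo.Dd i f) z = 2 * ChirTwo.Ee i f z := by
  have h1 := h.Dd_shift i z 1
  have h2 := h.Dd_shift i z (-1)
  change (ChirTwo.Dd i f (z + Pi.single i 1) - ChirTwo.Dd i f (z + Pi.single i (-1))) / 2 = _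
  rw [h1, h2]
  field_simp
  ring

end Ops

section Stab
variable {ι : Type*} [Fintype ι] [DecidableEq ι]

/-- coercion of real points -/
def up (p : ι → ℝ) : ι → ℂ := fun i => (p i : ℂ)

theorem up_add_single (p : ι → ℝ) (i : ι) (w : ℝ) :
    up (p + Pi.single i w) = up p + Pi.single i (w : ℂ) := by
  funext k
  by_cases h : k = i
  · subst h; simp [up]
  · simp [up, h]

/-- A complex function and its restriction to real points. -/
structure Nice (F : (ι → ℂ) → ℂ) (G : (ι → ℝ) → ℝ) : Prop where
  cont : Continuous F
  quadF : Quad F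
  quadG : Quad G
  lift : ∀ p, F (up p) = (G p : ℂ)

theorem cont_Dd {F : (ι → ℂ) → ℂ} (h : Continuous F) (i : ι) : Continuous (Dd i F) := by
  unfold Dd; fun_prop

theorem cont_Ee {F : (ι → ℂ) → ℂ} (h : Continuous F) (i : ι) : Continuous (Ee i F) := by
  unfold Ee; fun_prop

theorem Nice.Dd {F : (ι → ℂ) → ℂ} {G : (ι → ℝ) → ℝ} (h : Nice F G) (i : ι) :
    Nice (Dd i F) (Dd i G) where
  cont := cont_Dd h.cont i
  quadF := h.quadF.Dd i
  quadG := h.quadG.Dd i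
  lift p := by
    have h1 := h.lift (p + Pi.single i 1)
    have h2 := h.lift (p + Pi.single i (-1))
    rw [up_add_single] at h1 h2
    push_cast at h1 h2
    simp only [ChirTwo.Dd, h1, h2]
    push_cast; rfl

theorem Nice.Ee {F : (ι → ℂ) → ℂ} {G : (ι → ℝ) → ℝ} (h : Nice F G) (i : ι) :
    Nice (Ee i F) (Ee i G) where
  cont := cont_Ee h.cont i
  quadF := h.quadF.Ee i
  quadG := h.quadG.Ee i
  lift p := by
    have h1 := h.lift (p + Pi.single i 1)
    have h2 := h.lift (p + Pi.single i (-1))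
    rw [up_add_single] at h1 h2
    push_cast at h1 h2
    simp only [ChirTwo.Ee, h1, h2, h.lift]
    push_cast; rfl

theorem Nice.EL {F : (ι → ℂ) → ℂ} {G : (ι → ℝ) → ℝ} (h : Nice F G) (L : List ι) :
    Nice (EL L F) (EL L G) := by
  induction L with
  | nil => exact h
  | cons j L ih => exact ih.Ee j

/-- nonvanishing on the product of upper half planes -/
def Stab (F : (ι → ℂ) → ℂ) : Prop := ∀ z : ι → ℂ, (∀ k, 0 < (z k).im) → F z ≠ 0

theorem exists_sqrt (c : ℂ) : ∃ s : ℂ, s * s = c := by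
  obtain ⟨s, hs⟩ := IsAlgClosed.exists_pow_nat_eq c (n := 2) (by norm_num)
  exact ⟨s, by rw [← hs]; ring⟩

theorem uhp_shift {z : ι → ℂ} (hz : ∀ k, 0 < (z k).im) (i : ι) {s : ℂ} (hs : 0 ≤ s.im) :
    ∀ k, 0 < ((z + Pi.single i s : ι → ℂ) k).im := by
  intro k
  by_cases h : k = i
  · subst h; simpa using add_pos_of_pos_of_nonneg (hz k) hs
  · simpa [h] using hz k

theorem Stab.Dd {F : (ι → ℂ) → ℂ} (hq : Quad F) (h : Stab F) (i : ι) (hE : Stab (Ee i F)) :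
    Stab (Dd i F) := by
  intro z hz h0
  have he := hE z hz
  obtain ⟨s, hs⟩ := exists_sqrt (- F z / ChirTwo.Ee i F z)
  obtain ⟨s, hs, him⟩ : ∃ s : ℂ, s * s = - F z / ChirTwo.Ee i F z ∧ 0 ≤ s.im := by
    rcases le_total 0 s.im with h1 | h1
    · exact ⟨s, hs, h1⟩
    · exact ⟨-s, by rw [← hs]; ring, by simpa using h1⟩
  apply h _ (uhp_shift hz i him)
  rw [hq, h0, pow_two, hs]
  field_simp
  ring

theorem im_le_of_quad (d e : ℂ) (h : ∀ s : ℂ, 0 ≤ s.im → 1 + s * d + s ^ 2 * e ≠ 0) :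
    d.im ≤ 0 := by
  have key : ∀ t : ℂ, t ^ 2 + d * t + e = 0 → 0 ≤ t.im := by
    intro t ht
    by_contra hneg
    push Not at hneg
    have t0 : t ≠ 0 := by rintro rfl; simp at hneg
    apply h t⁻¹
    · rw [Complex.inv_im]
      apply div_nonneg (by linarith) (Complex.normSq_nonneg _)
    · field_simp
      linear_combination ht
  obtain ⟨r, hr⟩ := exists_sqrt (d ^ 2 - 4 * e)
  have h1 := key ((-d + r) / 2) (by linear_combination hr / 4)
  have h2 := key ((-d - r) / 2) (by linear_combination hr / 4)
  have h3 : ((-d + r) / 2 + (-d - r) / 2).im = (-d).im := by congr 1; ring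
  rw [Complex.add_im, Complex.neg_im] at h3
  linarith

theorem Stab.im_le {F : (ι → ℂ) → ℂ} (hq : Quad F) (h : Stab F) (j : ι) (z : ι → ℂ)
    (hz : ∀ k, 0 < (z k).im) : (ChirTwo.Dd j F z * (starRingEnd ℂ) (F z)).im ≤ 0 := by
  have h0 := h z hz
  have h1 : (ChirTwo.Dd j F z / F z).im ≤ 0 := by
    apply im_le_of_quad _ (ChirTwo.Ee j F z / F z)
    intro s hs hs0
    apply h _ (uhp_shift hz j hs)
    rw [hq]
    have e : F z * (1 + s * (ChirTwo.Dd j F z / F z) + s ^ 2 * (ChirTwo.Ee j F z / F z)) =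
        F z + s * ChirTwo.Dd j F z + s ^ 2 * ChirTwo.Ee j F z := by field_simp
    rw [← e, hs0, mul_zero]
  have h2 : ChirTwo.Dd j F z * (starRingEnd ℂ) (F z)
      = (Complex.normSq (F z) : ℂ) * (ChirTwo.Dd j F z / F z) := by
    rw [Complex.normSq_eq_conj_mul_self]; field_simp
  rw [h2, Complex.im_ofReal_mul]
  exact mul_nonpos_of_nonneg_of_nonpos (Complex.normSq_nonneg _) h1

theorem Stab.im_le' {F : (ι → ℂ) → ℂ} (hc : Continuous F) (hq : Quad F) (h : Stab F) (j : ι)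
    (z : ι → ℂ) (hz : ∀ k, 0 ≤ (z k).im) :
    (ChirTwo.Dd j F z * (starRingEnd ℂ) (F z)).im ≤ 0 := by
  have hcD := cont_Dd hc j
  let φ : ℝ → ℝ := fun ε =>
    (ChirTwo.Dd j F (fun k => z k + ε * Complex.I) *
      (starRingEnd ℂ) (F (fun k => z k + ε * Complex.I))).im
  have hφ : Continuous φ := by
    apply Complex.continuous_im.comp
    apply Continuous.mul
    · exact hcD.comp (by fun_prop)
    · exact Complex.continuous_conj.comp (hc.comp (by fun_prop))
  have h0 : φ 0 = (ChirTwo.Dd j F z * (starRingEnd ℂ) (F z)).im := by simp [φ]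
  rw [← h0]
  have ht : Filter.Tendsto φ (nhdsWithin 0 (Set.Ioi 0)) (nhds (φ 0)) :=
    (hφ.tendsto 0).mono_left nhdsWithin_le_nhds
  apply le_of_tendsto ht
  filter_upwards [self_mem_nhdsWithin] with ε hε
  apply h.im_le hq
  intro k
  have : (0:ℝ) < ε := hε
  simpa using add_pos_of_nonneg_of_pos (hz k) this

theorem le_zero_of_quad (a e : ℝ) (h : ∀ v : ℝ, 0 < v → a + e * v ^ 2 ≤ 0) : a ≤ 0 := by
  have ht : Filter.Tendsto (fun v : ℝ => a + e * v ^ 2) (nhdsWithin 0 (Set.Ioi 0))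
      (nhds (a + e * 0 ^ 2)) :=
    ((by fun_prop : Continuous (fun v : ℝ => a + e * v ^ 2)).tendsto 0).mono_left
      nhdsWithin_le_nhds
  have := le_of_tendsto ht (b := 0) (by
    filter_upwards [self_mem_nhdsWithin] with v hv using h v hv)
  simpa using this

/-- Rayleigh inequality at real points. -/
theorem rayleigh {F : (ι → ℂ) → ℂ} {G : (ι → ℝ) → ℝ} (hN : Nice F G) (h : Stab F) (i j : ι)
    (p : ι → ℝ) : Dd i (Dd j G) p * G p ≤ Dd i G p * Dd j G p := by
  have key := fun v : ℝ => fun hv : 0 < v =>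
    h.im_le' hN.cont hN.quadF j (up p + Pi.single i (v * Complex.I)) (by
      intro k
      by_cases hk : k = i
      · subst hk; simp [up, hv.le]
      · simp [up, hk])
  have l0 := hN.lift p
  have l1 := (hN.Dd i).lift p
  have l2 := (hN.Ee i).lift p
  have m0 := (hN.Dd j).lift p
  have m1 := ((hN.Dd j).Dd i).lift p
  have m2 := ((hN.Dd j).Ee i).lift p
  have := le_zero_of_quad (Dd i (Dd j G) p * G p - Dd i G p * Dd j G p)
    (Ee i (Dd j G) p * Dd i G p - Dd i (Dd j G) p * Ee i G p) (by
      intro v hv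
      have k := key v hv
      rw [hN.quadF, (hN.quadF.Dd j), l0, l1, l2, m0, m1, m2] at k
      simp [pow_two] at k
      have : 0 ≤ - (Dd i (Dd j G) p * G p - Dd i G p * Dd j G p +
        (Ee i (Dd j G) p * Dd i G p - Dd i (Dd j G) p * Ee i G p) * v ^ 2) := by
        refine nonneg_of_mul_nonneg_left (b := v) ?_ hv
        nlinarith [k]
      linarith)
  linarith

end Stab

/-- The scalar core of the barrier step. -/
theorem step_scalar {q0 q1 q2 n0 n1 n2 δ φi φj : ℝ} (hq0 : 0 < q0) (hq1 : 0 < q1) (hq2 : 0 < q2)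
    (hδ : 0 ≤ δ) (hφ : 2 * δ * φi ≤ 1) (hi : q1 ≤ φi * q0) (hj : n0 ≤ φj * q0)
    (hlc : 2 * q2 * q0 ≤ q1 * q1)
    (hR0 : n1 * q0 ≤ q1 * n0)
    (hR : ∀ u : ℝ, (n1 + 2 * u * n2) * (q0 + u * q1 + u ^ 2 * q2) ≤
      (q1 + 2 * u * q2) * (n0 + u * n1 + u ^ 2 * n2)) :
    0 < q1 - 2 * δ * q2 ∧ n1 - 2 * δ * n2 ≤ φj * (q1 - 2 * δ * q2) := by
  have h1 : 2 * δ * q1 ≤ q0 := by nlinarith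
  have hQ : 0 < q1 - 2 * δ * q2 := by
    have : 0 < (q1 - 2 * δ * q2) * q1 := by nlinarith
    exact pos_of_mul_pos_left this hq1.le
  refine ⟨hQ, ?_⟩
  suffices hN : (n1 - 2 * δ * n2) * q0 ≤ n0 * (q1 - 2 * δ * q2) by
    have : (n1 - 2 * δ * n2) * q0 ≤ (φj * (q1 - 2 * δ * q2)) * q0 := by nlinarith
    exact le_of_mul_le_mul_right this hq0
  set a := n1 * q0 - n0 * q1 with ha
  set c := n2 * q0 - n0 * q2 with hc
  suffices a ≤ 2 * δ * c by simp only [ha, hc] at this; nlinarith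
  have ha0 : a ≤ 0 := by simp only [ha]; nlinarith
  rcases le_or_gt 0 c with hc0 | hc0
  · nlinarith [mul_nonneg hδ hc0]
  · -- a κ ≤ c τ
    have hu := hR (-(q0 / q1))
    have hk : a * (q1 ^ 2 - q0 * q2) ≤ c * q0 * q1 := by
      have e : ((n1 + 2 * (-(q0 / q1)) * n2) * (q0 + (-(q0 / q1)) * q1 + (-(q0 / q1)) ^ 2 * q2) -
        (q1 + 2 * (-(q0 / q1)) * q2) * (n0 + (-(q0 / q1)) * n1 + (-(q0 / q1)) ^ 2 * n2)) * q1 ^ 2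
        = a * (q1 ^ 2 - q0 * q2) - c * q0 * q1 := by
        simp only [ha, hc]; field_simp; ring
      nlinarith [sq_nonneg q1]
    have hκ : 0 < q1 ^ 2 - q0 * q2 := by nlinarith
    have : a * (q1 ^ 2 - q0 * q2) ≤ (2 * δ * c) * (q1 ^ 2 - q0 * q2) := by
      have t1 : 2 * δ * (q1 ^ 2 - q0 * q2) ≤ q0 * q1 := by
        nlinarith [mul_nonneg hδ (mul_pos hq0 hq2).le]
      nlinarith
    exact le_of_mul_le_mul_right this hκ

section Barrier
variable {ι : Type*} [Fintype ι] [DecidableEq ι]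

theorem le_add_single {p p' : ι → ℝ} (h : p ≤ p') (i : ι) {s : ℝ} (hs : 0 ≤ s) :
    p ≤ p' + Pi.single i s := by
  intro k
  by_cases hk : k = i
  · subst hk; simpa using le_add_of_le_of_nonneg (h k) hs
  · simpa [hk] using h k

/-- One barrier step for a single function. -/
theorem step_one {F : (ι → ℂ) → ℂ} {G : (ι → ℝ) → ℝ} (hN : Nice F G) (hS : Stab F) (i : ι)
    (p : ι → ℝ) (hG : ∀ p', p ≤ p' → 0 < G p') (hE : ∀ p', p ≤ p' → 0 < Ee i G p')
    {δ φi : ℝ} (hδ : 0 ≤ δ) (hφ : 2 * δ * φi ≤ 1) (hi : ∀ p', p ≤ p' → Dd i G p' ≤ φi * G p')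
    (p' : ι → ℝ) (hp : p ≤ p') :
    0 < Dd i G (p' + Pi.single i (-δ)) ∧ ∀ j φj, Dd j G p' ≤ φj * G p' →
      Dd j (Dd i G) (p' + Pi.single i (-δ)) ≤ φj * Dd i G (p' + Pi.single i (-δ)) := by
  have hq0 := hG p' hp
  have hq2 := hE p' hp
  have hlc : 2 * Ee i G p' * G p' ≤ Dd i G p' * Dd i G p' := by
    have := rayleigh hN hS i i p'
    rwa [hN.quadG.Dd_Dd] at this
  have hq1 : 0 < Dd i G p' := by
    by_contra hcon
    push Not at hcon
    have hs : 0 ≤ - Dd i G p' / (2 * Ee i G p') := div_nonneg (by linarith) (by linarith)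
    set s := - Dd i G p' / (2 * Ee i G p') with hsdef
    have h1 := hG _ (le_add_single hp i hs)
    have h2 := hE _ (le_add_single hp i hs)
    have h3 := rayleigh hN hS i i (p' + Pi.single i s)
    rw [hN.quadG.Dd_Dd, hN.quadG.Dd_shift i p' s] at h3
    have h4 : Dd i G p' + 2 * s * Ee i G p' = 0 := by
      rw [hsdef]; field_simp; ring
    rw [h4] at h3
    nlinarith [mul_pos h1 h2]
  have main : ∀ j φj, Dd j G p' ≤ φj * G p' → 0 < Dd i G p' - 2 * δ * Ee i G p' ∧
      Dd i (Dd j G) p' - 2 * δ * Ee i (Dd j G) p' ≤ φj * (Dd i G p' - 2 * δ * Ee i G p') := by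
    intro j φj hj
    refine step_scalar hq0 hq1 hq2 hδ hφ (hi p' hp) hj hlc (rayleigh hN hS i j p') ?_
    intro u
    have := rayleigh hN hS i j (p' + Pi.single i u)
    rw [(hN.quadG.Dd j).Dd_shift, hN.quadG.Dd_shift, hN.quadG, hN.quadG.Dd j] at this
    exact this
  have e1 : Dd i G (p' + Pi.single i (-δ)) = Dd i G p' - 2 * δ * Ee i G p' := by
    rw [hN.quadG.Dd_shift]; ring
  refine ⟨?_, ?_⟩
  · rw [e1]; exact (main i φi (hi p' hp)).1
  · intro j φj hj
    rw [e1, Dd_comm j i, (hN.quadG.Dd j).Dd_shift]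
    have := (main j φj hj).2
    linarith

/-- The invariant of the induction. -/
structure Good (φ : ι → ℝ) (F : (ι → ℂ) → ℂ) (G : (ι → ℝ) → ℝ) (K : List ι) (p : ι → ℝ) :
    Prop where
  nice : Nice F G
  stab : ∀ L : List ι, L.Nodup → (∀ k ∈ L, k ∉ K) → Stab (EL L F)
  pos : ∀ L : List ι, L.Nodup → (∀ k ∈ L, k ∉ K) → ∀ p', p ≤ p' → 0 < EL L G p'
  bar : ∀ L : List ι, L.Nodup → (∀ k ∈ L, k ∉ K) → ∀ j, j ∉ K → j ∉ L → ∀ p', p ≤ p' →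
    Dd j (EL L G) p' ≤ φ j * EL L G p'

theorem Good.step {φ : ι → ℝ} {F : (ι → ℂ) → ℂ} {G : (ι → ℝ) → ℝ} {K : List ι} {p : ι → ℝ}
    (h : Good φ F G K p) (i : ι) (hiK : i ∉ K) {δ : ℝ} (hδ : 0 ≤ δ) (hφ : 2 * δ * φ i ≤ 1) :
    Good φ (Dd i F) (Dd i G) (i :: K) (p + Pi.single i (-δ)) := by
  have aux : ∀ L : List ι, L.Nodup → (∀ k ∈ L, k ∉ i :: K) →
      (∀ k ∈ L, k ∉ K) ∧ (i :: L).Nodup ∧ (∀ k ∈ i :: L, k ∉ K) ∧ i ∉ L := by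
    intro L hL hd
    have h1 : i ∉ L := fun hi => hd i hi (by simp)
    have h2 : ∀ k ∈ L, k ∉ K := fun k hk hk' => hd k hk (by simp [hk'])
    refine ⟨h2, List.nodup_cons.mpr ⟨h1, hL⟩, ?_, h1⟩
    intro k hk
    rcases List.mem_cons.mp hk with rfl | hk
    · exact hiK
    · exact h2 k hk
  have key : ∀ L : List ι, L.Nodup → (∀ k ∈ L, k ∉ i :: K) → ∀ p', p + Pi.single i (-δ) ≤ p' →
      0 < Dd i (EL L G) p' ∧ ∀ j, j ∉ K → j ∉ L →
      Dd j (Dd i (EL L G)) p' ≤ φ j * Dd i (EL L G) p' := by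
    intro L hL hd p' hp'
    obtain ⟨h2, h3, h4, h1⟩ := aux L hL hd
    have hpp : p ≤ p' + Pi.single i δ := by
      intro k
      have := hp' k
      by_cases hk : k = i
      · subst hk; simp at this ⊢; linarith
      · simpa [hk] using this
    have e : p' + Pi.single i δ + Pi.single i (-δ) = p' := by
      rw [add_assoc, ← Pi.single_add]; simp
    have := step_one (h.nice.EL L) (h.stab L hL h2) i p (h.pos L hL h2)
      (h.pos (i :: L) h3 h4) hδ hφ (h.bar L hL h2 i hiK h1) _ hpp
    rw [e] at this
    exact ⟨this.1, fun j hj hjL => this.2 j (φ j) (h.bar L hL h2 j hj hjL _ hpp)⟩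
  refine ⟨h.nice.Dd i, ?_, ?_, ?_⟩
  · intro L hL hd
    obtain ⟨h2, h3, h4, h1⟩ := aux L hL hd
    rw [← Dd_EL]
    exact (h.stab L hL h2).Dd (h.nice.quadF.EL L) i (h.stab (i :: L) h3 h4)
  · intro L hL hd p' hp'
    rw [← Dd_EL]
    exact (key L hL hd p' hp').1
  · intro L hL hd j hj hjL p' hp'
    rw [← Dd_EL]
    exact (key L hL hd p' hp').2 j (fun hh => hj (by simp [hh])) hjL

theorem Good.all {φ : ι → ℝ} {F : (ι → ℂ) → ℂ} {G : (ι → ℝ) → ℝ}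
    (h : Good φ F G [] 0) {δ : ℝ} (hδ : 0 ≤ δ) (hφ : ∀ i, 2 * δ * φ i ≤ 1) (K : List ι)
    (hK : K.Nodup) :
    Good φ (DL K F) (DL K G) K (fun k => if k ∈ K then -δ else 0) := by
  induction K with
  | nil => exact (by simpa [DL] using! h)
  | cons i K ih =>
    rw [List.nodup_cons] at hK
    have := (ih hK.2).step i hK.1 hδ (hφ i)
    suffices e : (fun k => if k ∈ i :: K then -δ else 0) =
        (fun k => if k ∈ K then -δ else 0) + Pi.single i (-δ) by
      rw [e]; exact this
    funext k
    by_cases hk : k = i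
    · subst hk; simp [hK.1]
    · simp [hk]

end Barrier

section Final
variable {ι : Type*} [Fintype ι] [DecidableEq ι]

theorem Good.final {φ : ι → ℝ} {F : (ι → ℂ) → ℂ} {G : (ι → ℝ) → ℝ}
    (h : Good φ F G [] 0) {δ : ℝ} (hδ : 0 ≤ δ) (hφ : ∀ i, 2 * δ * φ i ≤ 1) (t : ℝ)
    (ht : -δ ≤ t) : DL Finset.univ.toList F (fun _ => (t : ℂ)) ≠ 0 := by
  have hg := h.all hδ hφ Finset.univ.toList (Finset.nodup_toList _)
  have h1 := hg.pos [] (by simp) (by simp) (fun _ => t) (by intro k; simpa using ht)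
  have h2 := hg.nice.lift (fun _ => t)
  have h3 : up (fun _ : ι => t) = fun _ => (t : ℂ) := rfl
  rw [h3] at h2
  rw [h2]
  exact_mod_cast h1.ne'

end Final

section Count
variable {ι : Type*} [Fintype ι] [DecidableEq ι]

def key (σ : Equiv.Perm ι) (x : ι) : Equiv.Perm ι ⊕ ι :=
  if σ x = x then Sum.inr x else Sum.inl (σ.cycleOf x)

theorem image_key (σ : Equiv.Perm ι) :
    Finset.univ.image (key σ) = σ.cycleFactorsFinset.disjSum σ.supportᶜ := by
  ext y
  simp only [Finset.mem_image, Finset.mem_univ, true_and]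
  constructor
  · rintro ⟨x, rfl⟩
    unfold key
    split_ifs with h
    · simp [h]
    · simpa [Equiv.Perm.cycleOf_mem_cycleFactorsFinset_iff] using h
  · intro h
    rcases y with c | x
    · have hc : c ∈ σ.cycleFactorsFinset := by simpa using h
      have hcy := (Equiv.Perm.mem_cycleFactorsFinset_iff.mp hc).1
      obtain ⟨x, hx⟩ := hcy.nonempty_support
      have h1 := Equiv.Perm.cycle_is_cycleOf hx hc
      have h2 := Equiv.Perm.mem_cycleFactorsFinset_support_le hc hx
      refine ⟨x, ?_⟩
      rw [key, if_neg (Equiv.Perm.mem_support.mp h2), h1]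
    · have hx : σ x = x := by simpa using h
      exact ⟨x, by simp [key, hx]⟩

theorem card_image_key (σ : Equiv.Perm ι) :
    (Finset.univ.image (key σ)).card = cycleCount σ := by
  rw [image_key, Finset.card_disjSum, Finset.card_compl, cycleCount, Equiv.Perm.cycleType_def]
  simp

theorem key_sigma (σ : Equiv.Perm ι) (x : ι) : key σ (σ x) = key σ x := by
  unfold key
  by_cases h : σ x = x
  · simp [h]
  · simp [h]

theorem sameCycle_of_key {σ : Equiv.Perm ι} {x y : ι} (h : key σ x = key σ y) :
    σ.SameCycle x y := by
  unfold key at h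
  split_ifs at h with h1 h2 h2
  · cases Sum.inr.inj h; exact Equiv.Perm.SameCycle.refl _ _
  · exact (Equiv.Perm.sameCycle_iff_cycleOf_eq_of_mem_support (by simpa using h1)
      (by simpa using h2)).mpr (Sum.inl.inj h)

theorem mem_of_sameCycle {σ : Equiv.Perm ι} {S : Finset ι} (hS : ∀ i, σ i ∈ S ↔ i ∈ S) {x y : ι}
    (h : σ.SameCycle x y) : x ∈ S ↔ y ∈ S := by
  obtain ⟨m, -, hm⟩ := h.exists_pow_eq'
  have : ∀ m : ℕ, (σ ^ m) x ∈ S ↔ x ∈ S := by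
    intro m
    induction m with
    | zero => simp
    | succ m ih => rw [pow_succ', Equiv.Perm.mul_apply, hS, ih]
  rw [← hm, this]

theorem card_invariant (σ : Equiv.Perm ι) :
    (Finset.univ.filter fun S : Finset ι => ∀ i, σ i ∈ S ↔ i ∈ S).card = 2 ^ cycleCount σ := by
  rw [← card_image_key, ← Finset.card_powerset]
  apply Finset.card_nbij' (fun S => S.image (key σ))
    (fun U => Finset.univ.filter fun x => key σ x ∈ U)
  · intro S _
    simp only [Finset.coe_powerset, Set.mem_preimage, Set.mem_powerset_iff, Finset.coe_subset]
    exact Finset.image_subset_image (Finset.subset_univ _)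
  · intro U _
    simp [key_sigma]
  · intro S hS
    have hS' : ∀ i, σ i ∈ S ↔ i ∈ S := by simpa using hS
    ext x
    simp only [Finset.mem_filter, Finset.mem_univ, true_and, Finset.mem_image]
    constructor
    · rintro ⟨y, hy, e⟩
      exact (mem_of_sameCycle hS' (sameCycle_of_key e)).mp hy
    · intro hx; exact ⟨x, hx, rfl⟩
  · intro U hU
    have hU' : U ⊆ Finset.univ.image (key σ) := by
      rw [← Finset.mem_powerset]; exact hU
    ext c
    simp only [Finset.mem_image, Finset.mem_filter, Finset.mem_univ, true_and]
    constructor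
    · rintro ⟨x, hx, rfl⟩; exact hx
    · intro hc
      obtain ⟨x, -, rfl⟩ := Finset.mem_image.mp (hU' hc)
      exact ⟨x, hc, rfl⟩

/-- block-diagonal part of `M` with respect to `S`, `Sᶜ`. -/
def blk (S : Finset ι) (M : Matrix ι ι ℂ) : Matrix ι ι ℂ :=
  Matrix.of fun i j => if (j ∈ S ↔ i ∈ S) then M i j else 0

theorem detr_eq (M : Matrix ι ι ℂ) : detr 2 M = ∑ S : Finset ι, (blk S M).det := by
  have h : ∀ S : Finset ι, (blk S M).det = ∑ σ : Equiv.Perm ι,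
      if (∀ i, σ i ∈ S ↔ i ∈ S) then ((Equiv.Perm.sign σ : ℤ) : ℂ) * ∏ i, M i (σ i) else 0 := by
    intro S
    rw [← Matrix.det_transpose, Matrix.det_apply']
    apply Finset.sum_congr rfl
    intro σ _
    split_ifs with hσ
    · congr 1
      apply Finset.prod_congr rfl
      intro i _
      simp [blk, hσ i]
    · push Not at hσ
      obtain ⟨i, hi⟩ := hσ
      have : ∏ i, (blk S M)ᵀ (σ i) i = 0 := by
        apply Finset.prod_eq_zero (Finset.mem_univ i)
        simp only [blk, Matrix.transpose_apply, Matrix.of_apply]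
        rw [if_neg]; tauto
      rw [this, mul_zero]
  simp_rw [h]
  rw [Finset.sum_comm, detr]
  apply Finset.sum_congr rfl
  intro σ _
  rw [← Finset.sum_filter, Finset.sum_const, card_invariant]
  simp
  ring

end Count

section Base
variable {ι : Type*} [Fintype ι] [DecidableEq ι]

/-- The matrix `Z + B` restricted to `S`, extended by the identity. -/
def NN (B : Matrix ι ι ℂ) (S : Finset ι) (z : ι → ℂ) : Matrix ι ι ℂ :=
  Matrix.of fun i j => if i ∈ S ∧ j ∈ S then (Matrix.diagonal z + B) i j
    else if i = j then 1 else 0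

def PP (B : Matrix ι ι ℂ) (S : Finset ι) (z : ι → ℂ) : ℂ := (NN B S z).det

theorem det_updateRow_self (M : Matrix ι ι ℂ) (i : ι) :
    (M.updateRow i (Pi.single i 1)).det =
      ((M.updateRow i (Pi.single i 1)).updateCol i (Pi.single i 1)).det := by
  set A := M.updateRow i (Pi.single i 1) with hA
  have h1 : A.det = A.adjugate i i := by
    rw [Matrix.adjugate_apply, hA, Matrix.updateRow_idem]
  have h2 : A.adjugate i i = Aᵀ.adjugate i i := by
    rw [← Matrix.adjugate_transpose, Matrix.transpose_apply]
  rw [h1, h2, Matrix.adjugate_apply, Matrix.updateRow_transpose, Matrix.det_transpose]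

theorem NN_erase (B : Matrix ι ι ℂ) (S : Finset ι) (z : ι → ℂ) (i : ι) :
    ((NN B S z).updateRow i (Pi.single i 1)).updateCol i (Pi.single i 1)
      = NN B (S.erase i) z := by
  ext k l
  by_cases hk : k = i
  · subst hk
    by_cases hl : l = k
    · subst hl; simp [NN]
    · simp [NN, Matrix.updateCol_apply, hl, Ne.symm hl, Pi.single_apply]
  · by_cases hl : l = i
    · subst hl; simp [NN, hk]
    · simp [NN, Matrix.updateCol_apply, Matrix.updateRow_apply, hl, hk]

theorem PP_erase_eq_adj (B : Matrix ι ι ℂ) (S : Finset ι) (z : ι → ℂ) (i : ι) :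
    PP B (S.erase i) z = (NN B S z).adjugate i i := by
  rw [Matrix.adjugate_apply, det_updateRow_self, NN_erase]; rfl

/-- slope of `PP B S` in direction `i` -/
def aa (B : Matrix ι ι ℂ) (S : Finset ι) (i : ι) (z : ι → ℂ) : ℂ :=
  if i ∈ S then PP B (S.erase i) z else 0

theorem PP_shift (B : Matrix ι ι ℂ) (S : Finset ι) (z : ι → ℂ) (i : ι) (w : ℂ) :
    PP B S (z + Pi.single i w) = PP B S z + w * aa B S i z := by
  unfold aa
  split_ifs with hi
  · rw [PP_erase_eq_adj, Matrix.adjugate_apply, PP, PP]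
    have : NN B S (z + Pi.single i w) =
        (NN B S z).updateRow i ((NN B S z) i + w • (Pi.single i 1 : ι → ℂ)) := by
      ext k l
      by_cases hk : k = i
      · subst hk
        by_cases hl : l = k
        · subst hl; simp [NN, hi]; ring
        · simp [NN, hi, hl, Ne.symm hl, Pi.single_apply]
      · by_cases hl : l = i
        · subst hl; simp [NN, hk]
        · by_cases hkl : k = l
          · subst hkl; simp [NN, hk]
          · simp [NN, hk, hkl]
    rw [this, Matrix.det_updateRow_add, Matrix.det_updateRow_smul, Matrix.updateRow_eq_self]
  · rw [mul_zero, add_zero, PP, PP]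
    congr 1
    ext k l
    by_cases hk : k = i
    · subst hk; simp [NN, hi]
    · by_cases hkl : k = l
      · subst hkl; simp [NN, hk]
      · simp [NN, hkl]

theorem cont_PP (B : Matrix ι ι ℂ) (S : Finset ι) : Continuous (PP B S) := by
  unfold PP
  apply Continuous.matrix_det
  apply continuous_matrix
  intro i j
  simp only [NN, Matrix.of_apply]
  split_ifs with h h
  · simp only [Matrix.add_apply, Matrix.diagonal_apply]
    split_ifs
    · fun_prop
    · fun_prop
  · fun_prop
  · fun_prop

theorem Dd_PP (B : Matrix ι ι ℂ) (S T : Finset ι) (i : ι) :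
    Dd i (fun z => PP B S z * PP B T z) =
      fun z => aa B S i z * PP B T z + PP B S z * aa B T i z := by
  funext z
  simp only [Dd, PP_shift]
  ring

theorem Ee_PP (B : Matrix ι ι ℂ) (S T : Finset ι) (i : ι) :
    Ee i (fun z => PP B S z * PP B T z) = fun z => aa B S i z * aa B T i z := by
  funext z
  simp only [Ee, PP_shift]
  ring

theorem quad_PP (B : Matrix ι ι ℂ) (S T : Finset ι) : Quad (fun z => PP B S z * PP B T z) := by
  intro i z w
  rw [Dd_PP, Ee_PP]
  simp only [PP_shift]
  ring

theorem EL_PP (B : Matrix ι ι ℂ) (L : List ι) (hL : L.Nodup) :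
    EL L (fun z => PP B Finset.univ z * PP B Finset.univ z) =
      fun z => PP B (L.toFinset)ᶜ z * PP B (L.toFinset)ᶜ z := by
  induction L with
  | nil => simp [EL]
  | cons i L ih =>
    rw [List.nodup_cons] at hL
    change Ee i (EL L _) = _
    rw [ih hL.2, Ee_PP]
    have : (L.toFinset)ᶜ.erase i = ((i :: L).toFinset)ᶜ := by
      ext k; simp
    have h2 : i ∈ (L.toFinset)ᶜ := by simp [hL.1]
    funext z
    rw [aa, if_pos h2, this]

theorem Dd_sum {κ : Type*} (s : Finset κ) (f : κ → (ι → ℂ) → ℂ) (i : ι) :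
    Dd i (fun z => ∑ k ∈ s, f k z) = fun z => ∑ k ∈ s, Dd i (f k) z := by
  funext z
  simp only [Dd]
  rw [← Finset.sum_sub_distrib, Finset.sum_div]

theorem DL_PP (B : Matrix ι ι ℂ) (L : List ι) (hL : L.Nodup) :
    DL L (fun z => PP B Finset.univ z * PP B Finset.univ z) =
      fun z => ∑ S ∈ L.toFinset.powerset, PP B Sᶜ z * PP B (L.toFinset \ S)ᶜ z := by
  induction L with
  | nil => simp [DL]
  | cons i L ih =>
    rw [List.nodup_cons] at hL
    change Dd i (DL L _) = _
    rw [ih hL.2, Dd_sum]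
    funext z
    have hi : i ∉ L.toFinset := by simpa using hL.1
    rw [List.toFinset_cons, Finset.sum_powerset_insert hi, ← Finset.sum_add_distrib]
    apply Finset.sum_congr rfl
    intro S hS
    rw [Finset.mem_powerset] at hS
    have hiS : i ∉ S := fun h => hi (hS h)
    rw [Dd_PP]
    have e1 : (Sᶜ).erase i = (insert i S)ᶜ := by ext k; simp
    have e2 : (L.toFinset \ S)ᶜ.erase i = (insert i L.toFinset \ S)ᶜ := by
      ext k
      by_cases hk : k = i
      · subst hk; simp [hiS]
      · simp [hk]
    have e3 : insert i L.toFinset \ insert i S = L.toFinset \ S := by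
      ext k
      by_cases hk : k = i
      · subst hk; simp [hL.1]
      · simp [hk]
    have e4 : i ∈ (L.toFinset \ S)ᶜ := by simp [hL.1]
    have e5 : i ∈ Sᶜ := by simp [hiS]
    simp only [aa]
    rw [if_pos e4, if_pos e5, e1, e2, e3]
    ring

theorem PP_mul_compl (B : Matrix ι ι ℂ) (S : Finset ι) (z : ι → ℂ) :
    PP B Sᶜ z * PP B S z = (blk S (Matrix.diagonal z + B)).det := by
  rw [PP, PP, ← Matrix.det_mul]
  congr 1
  ext i j
  rw [Matrix.mul_apply]
  by_cases hi : i ∈ S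
  · rw [Finset.sum_eq_single i]
    · by_cases hj : j ∈ S
      · simp [NN, blk, hi, hj]
      · have : i ≠ j := fun h => hj (h ▸ hi)
        simp [NN, blk, hi, hj, this]
    · intro k _ hk
      simp [NN, hi, Ne.symm hk]
    · simp
  · by_cases hj : j ∈ S
    · rw [Finset.sum_eq_zero]
      · simp [blk, hi, hj]
      · intro k _
        by_cases hk : k ∈ S
        · have : i ≠ k := fun h => hi (h ▸ hk)
          simp [NN, hk, this]
        · have : k ≠ j := fun h => hk (h ▸ hj)
          simp [NN, hk, this]
    · rw [Finset.sum_eq_single j]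
      · simp [NN, blk, hi, hj]
      · intro k _ hk
        simp [NN, hj, hk]
      · simp

theorem DL_eq_detr (B : Matrix ι ι ℂ) (z : ι → ℂ) :
    DL Finset.univ.toList (fun z => PP B Finset.univ z * PP B Finset.univ z) z =
      detr 2 (Matrix.diagonal z + B) := by
  rw [DL_PP B _ (Finset.nodup_toList _), detr_eq]
  simp only [Finset.toList_toFinset, Finset.powerset_univ]
  apply Finset.sum_congr rfl
  intro S _
  rw [← PP_mul_compl]
  congr 2
  ext k; simp

end Base

open scoped ComplexOrder

section Pos
variable {ι : Type*} [Fintype ι] [DecidableEq ι]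

/-- restriction of a vector to `S` -/
def res (S : Finset ι) (x : ι → ℂ) : ι → ℂ := fun k => if k ∈ S then x k else 0

theorem quadform (B : Matrix ι ι ℂ) (S : Finset ι) (z x : ι → ℂ) :
    star x ⬝ᵥ (NN B S z *ᵥ x) = star (res S x) ⬝ᵥ (B *ᵥ res S x) +
      ∑ k, z k * (Complex.normSq (res S x k) : ℂ) +
      ∑ k, (Complex.normSq (res Sᶜ x k) : ℂ) := by
  have h : ∀ k, (NN B S z *ᵥ x) k =
      (if k ∈ S then (B *ᵥ res S x) k else 0) + z k * res S x k + res Sᶜ x k := by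
    intro k
    by_cases hk : k ∈ S
    · have : (NN B S z *ᵥ x) k = ((Matrix.diagonal z + B) *ᵥ res S x) k := by
        simp only [Matrix.mulVec, dotProduct]
        apply Finset.sum_congr rfl
        intro l _
        by_cases hl : l ∈ S
        · simp [NN, res, hk, hl]
        · have : k ≠ l := fun h => hl (h ▸ hk)
          simp [NN, res, hl, this]
      rw [this, Matrix.add_mulVec, Pi.add_apply, Matrix.mulVec_diagonal]
      simp [hk, res]; ring
    · have : (NN B S z *ᵥ x) k = x k := by
        simp only [Matrix.mulVec, dotProduct]
        rw [Finset.sum_eq_single k]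
        · simp [NN, hk]
        · intro l _ hl; simp [NN, hk, Ne.symm hl]
        · simp
      rw [this]; simp [res, hk]
  simp only [dotProduct]
  rw [← Finset.sum_add_distrib, ← Finset.sum_add_distrib]
  apply Finset.sum_congr rfl
  intro k _
  rw [h k, Complex.normSq_eq_conj_mul_self, Complex.normSq_eq_conj_mul_self]
  by_cases hk : k ∈ S
  · simp [res, hk]; ring
  · simp [res, hk]

theorem herm_im (B : Matrix ι ι ℂ) (hB : B.IsHermitian) (x : ι → ℂ) :
    (star x ⬝ᵥ (B *ᵥ x)).im = 0 := by
  have := hB.im_star_dotProduct_mulVec_self x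
  simpa using this

theorem res_add (S : Finset ι) (x : ι → ℂ) (h : res S x = 0) (h' : res Sᶜ x = 0) : x = 0 := by
  funext k
  by_cases hk : k ∈ S
  · simpa [res, hk] using congrFun h k
  · simpa [res, hk] using congrFun h' k

theorem zero_of_sum {c : ι → ℝ} (hc : ∀ k, 0 < c k) (x : ι → ℂ)
    (h : ∑ k, c k * Complex.normSq (x k) = 0) : x = 0 := by
  rw [Finset.sum_eq_zero_iff_of_nonneg
    (fun k _ => mul_nonneg (hc k).le (Complex.normSq_nonneg _))] at h
  funext k
  have := h k (Finset.mem_univ k)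
  rcases mul_eq_zero.mp this with h1 | h1
  · exact absurd h1 (hc k).ne'
  · exact Complex.normSq_eq_zero.mp h1

theorem stab_PP (B : Matrix ι ι ℂ) (hB : B.IsHermitian) (S : Finset ι) : Stab (PP B S) := by
  intro z hz h0
  obtain ⟨x, hx, hx0⟩ := Matrix.exists_mulVec_eq_zero_iff.mpr h0
  have hq := quadform B S z x
  rw [hx0, dotProduct_zero] at hq
  have him := congrArg Complex.im hq
  have hre := congrArg Complex.re hq
  simp [herm_im B hB] at him
  have h1 : res S x = 0 := zero_of_sum hz _ him.symm
  rw [h1] at hre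
  simp at hre
  have h2 : res Sᶜ x = 0 := zero_of_sum (c := fun _ => 1) (fun _ => one_pos) _
    (by simpa using hre.symm)
  exact hx (res_add S x h1 h2)

theorem herm_NN (B : Matrix ι ι ℂ) (hB : B.IsHermitian) (S : Finset ι) (p : ι → ℝ) :
    (NN B S (up p)).IsHermitian := by
  ext i j
  by_cases hij : i = j
  · subst hij
    have := hB.apply i i
    by_cases hi : i ∈ S
    · simpa [NN, hi, up] using this
    · simp [NN, hi]
  · have := hB.apply i j
    by_cases h : i ∈ S ∧ j ∈ S
    · simp [NN, h.1, h.2, hij, Ne.symm hij, this] at this ⊢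
    · have h' : ¬ (j ∈ S ∧ i ∈ S) := fun h2 => h h2.symm
      simp [NN, h, h', hij, Ne.symm hij]

theorem PP_real (B : Matrix ι ι ℂ) (hB : B.IsHermitian) (S : Finset ι) (p : ι → ℝ) :
    (PP B S (up p)).im = 0 := by
  have h : star (PP B S (up p)) = PP B S (up p) := by
    rw [PP, ← Matrix.det_conjTranspose, herm_NN B hB S p]
  exact Complex.conj_eq_iff_im.mp h

theorem posDef_NN (B : Matrix ι ι ℂ) (hB : B.PosDef) (S : Finset ι) (p : ι → ℝ) (hp : 0 ≤ p) :
    (NN B S (up p)).PosDef := by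
  apply Matrix.PosDef.of_dotProduct_mulVec_pos (herm_NN B hB.1 S p)
  intro x hx
  rw [Complex.pos_iff]
  refine ⟨?_, (herm_im _ (herm_NN B hB.1 S p) x).symm⟩
  rw [quadform]
  have h1 : 0 ≤ ∑ k, p k * Complex.normSq (res S x k) :=
    Finset.sum_nonneg fun k _ => mul_nonneg (hp k) (Complex.normSq_nonneg _)
  have h2 : 0 ≤ ∑ k, Complex.normSq (res Sᶜ x k) :=
    Finset.sum_nonneg fun k _ => Complex.normSq_nonneg _
  simp [up]
  by_cases hS : res S x = 0
  · have h3 : 0 < ∑ k, Complex.normSq (res Sᶜ x k) := by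
      refine lt_of_le_of_ne h2 fun h => hx (res_add S x hS ?_)
      exact zero_of_sum (c := fun _ => 1) (fun _ => one_pos) _ (by simpa using h.symm)
    simpa [hS] using h3
  · have := hB.re_dotProduct_pos hS
    simp only [RCLike.re_to_complex] at this
    linarith

theorem inv_le (B : Matrix ι ι ℂ) (hB : B.PosDef) (S : Finset ι) (p : ι → ℝ) (hp : 0 ≤ p)
    (j : ι) (hj : j ∈ S) : ((NN B S (up p))⁻¹ j j).re ≤ (B⁻¹ j j).re := by
  have hC := posDef_NN B hB S p hp
  set C := NN B S (up p) with hCdef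
  have hCu : IsUnit C.det := (Matrix.isUnit_iff_isUnit_det _).mp hC.isUnit
  have hBu : IsUnit B.det := (Matrix.isUnit_iff_isUnit_det _).mp hB.isUnit
  set x := C⁻¹ *ᵥ (Pi.single j 1) with hx
  set y := B⁻¹ *ᵥ (Pi.single j 1) with hy
  have hCx : C *ᵥ x = Pi.single j 1 := by
    rw [hx, Matrix.mulVec_mulVec, Matrix.mul_nonsing_inv _ hCu, Matrix.one_mulVec]
  have hBy : B *ᵥ y = Pi.single j 1 := by
    rw [hy, Matrix.mulVec_mulVec, Matrix.mul_nonsing_inv _ hBu, Matrix.one_mulVec]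
  have hxj : x j = C⁻¹ j j := by simp [hx]
  have hyj : y j = B⁻¹ j j := by simp [hy]
  have hq := quadform B S (up p) x
  rw [← hCdef, hCx] at hq
  have hqr := congrArg Complex.re hq
  have h1 : 0 ≤ ∑ k, p k * Complex.normSq (res S x k) :=
    Finset.sum_nonneg fun k _ => mul_nonneg (hp k) (Complex.normSq_nonneg _)
  have h2 : 0 ≤ ∑ k, Complex.normSq (res Sᶜ x k) :=
    Finset.sum_nonneg fun k _ => Complex.normSq_nonneg _
  simp [up] at hqr
  set u := res S x with hu
  have huj : u j = x j := by simp [hu, res, hj]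
  have hpos := hB.posSemidef.re_dotProduct_nonneg (u - y)
  have e : star (u - y) ⬝ᵥ (B *ᵥ (u - y)) =
      star u ⬝ᵥ (B *ᵥ u) - star (u j) - u j + star (y j) := by
    have hyB : star y ⬝ᵥ (B *ᵥ u) = u j := by
      rw [Matrix.dotProduct_mulVec]
      have : star y ᵥ* B = star (B *ᵥ y) := by
        rw [Matrix.star_mulVec B y, hB.1.eq]
      rw [this, hBy]
      simp
    rw [Matrix.mulVec_sub, star_sub, sub_dotProduct, dotProduct_sub, dotProduct_sub, hyB, hBy]
    simp
    ring
  rw [e, huj] at hpos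
  simp at hpos
  rw [← hxj, ← hyj]
  linarith

theorem good_base (B : Matrix ι ι ℂ) (hB : B.PosDef) :
    Good (fun j => 2 * (B⁻¹ j j).re) (fun z => PP B Finset.univ z * PP B Finset.univ z)
      (fun p => (PP B Finset.univ (up p) * PP B Finset.univ (up p)).re) [] 0 := by
  have hN : Nice (fun z => PP B Finset.univ z * PP B Finset.univ z)
      (fun p => (PP B Finset.univ (up p) * PP B Finset.univ (up p)).re) := by
    refine ⟨(cont_PP B _).mul (cont_PP B _), quad_PP B _ _, ?_, ?_⟩
    · intro i p w
      have h := congrArg Complex.re (quad_PP B Finset.univ Finset.univ i (up p) (w : ℂ))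
      have u1 := up_add_single p i 1
      have u2 := up_add_single p i (-1)
      have u3 := up_add_single p i w
      push_cast at u1 u2
      simp only [Dd, Ee, u1, u2, u3] at h ⊢
      rw [h]
      simp [pow_two]
    · intro p
      apply Complex.ext
      · simp
      · simp [PP_real B hB.1]
  have hval : ∀ S p, 0 ≤ p → 0 < (PP B S (up p)).re := fun S p hp =>
    (Complex.pos_iff.mp (posDef_NN B hB S p hp).det_pos).1
  have hEL : ∀ L : List ι, L.Nodup → ∀ p, EL L
      (fun p => (PP B Finset.univ (up p) * PP B Finset.univ (up p)).re) p =
      (PP B (L.toFinset)ᶜ (up p)).re * (PP B (L.toFinset)ᶜ (up p)).re := by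
    intro L hL p
    have := (hN.EL L).lift p
    rw [EL_PP B L hL] at this
    have := congrArg Complex.re this
    rw [Complex.ofReal_re] at this
    rw [← this]
    simp [PP_real B hB.1]
  refine ⟨hN, ?_, ?_, ?_⟩
  · intro L hL _ z hz
    rw [EL_PP B L hL]
    have := stab_PP B hB.1 (L.toFinset)ᶜ z hz
    exact mul_ne_zero this this
  · intro L hL _ p hp
    rw [hEL L hL]
    have := hval (L.toFinset)ᶜ p hp
    positivity
  · intro L hL _ j _ hj p hp
    rw [hEL L hL]
    have hl := ((hN.EL L).Dd j).lift p
    rw [EL_PP B L hL, Dd_PP] at hl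
    have hjS : j ∈ (L.toFinset)ᶜ := by simpa using hj
    have hl' := congrArg Complex.re hl
    simp only [aa, if_pos hjS] at hl'
    set S := (L.toFinset)ᶜ with hS
    have hPr := PP_real B hB.1 S p
    have hv := hval S p hp
    have hle := inv_le B hB S p hp j hjS
    have hinv : (NN B S (up p))⁻¹ j j * PP B S (up p) = PP B (S.erase j) (up p) := by
      rw [PP_erase_eq_adj, Matrix.inv_def, Matrix.smul_apply, smul_eq_mul, Ring.inverse_eq_inv']
      have : PP B S (up p) ≠ 0 := fun h => by simp [h] at hv
      unfold PP at this ⊢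
      field_simp
    have hinvr := congrArg Complex.re hinv
    rw [Complex.ofReal_re] at hl'
    rw [← hl']
    simp [hPr] at hinvr ⊢
    rw [← hinvr]
    nlinarith [mul_le_mul_of_nonneg_right hle (mul_pos hv hv).le]

end Pos

theorem posDef_sub {n : ℕ} (A : Matrix (Fin n) (Fin n) ℂ) (hA : A.IsHermitian)
    (b : ℝ) (hb : ∀ i, hA.eigenvalues i < b) :
    (((b : ℂ) • (1 : Matrix (Fin n) (Fin n) ℂ)) - A).PosDef := by
  have hB : (((b : ℂ) • (1 : Matrix (Fin n) (Fin n) ℂ)) - A).IsHermitian := by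
    apply Matrix.IsHermitian.sub _ hA
    ext i j
    by_cases h : i = j
    · subst h; simp
    · simp [h, Ne.symm h, Matrix.one_apply]
  rw [hB.posDef_iff_eigenvalues_pos]
  intro i
  have h1 : hB.eigenvalues i ∈ spectrum ℝ (((b : ℂ) • (1 : Matrix (Fin n) (Fin n) ℂ)) - A) := by
    rw [hB.spectrum_real_eq_range_eigenvalues]; exact ⟨i, rfl⟩
  have h2 : ((b : ℂ) • (1 : Matrix (Fin n) (Fin n) ℂ)) =
      algebraMap ℝ (Matrix (Fin n) (Fin n) ℂ) b := by
    rw [Algebra.algebraMap_eq_smul_one]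
    ext i j
    simp
  generalize hB.eigenvalues i = μ at h1 ⊢
  rw [h2, ← spectrum.singleton_sub_eq, hA.spectrum_real_eq_range_eigenvalues] at h1
  obtain ⟨_, rfl, _, ⟨k, rfl⟩, h3⟩ := h1
  have := hb k
  simp only at h3
  linarith

theorem chir_eval {n : ℕ} (A : Matrix (Fin n) (Fin n) ℂ) (b x : ℂ) :
    (chir 2 A).eval x = detr 2 (Matrix.diagonal (fun _ => x - b) +
      ((b • (1 : Matrix (Fin n) (Fin n) ℂ)) - A)) := by
  unfold chir detr
  rw [Polynomial.eval_finsetSum]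
  apply Finset.sum_congr rfl
  intro σ _
  rw [Polynomial.eval_mul, Polynomial.eval_mul, Polynomial.eval_prod]
  congr 1
  · simp
  · apply Finset.prod_congr rfl
    intro i _
    by_cases h : i = σ i
    · rw [← h]; simp [Matrix.charmatrix_apply_eq]
    · rw [Matrix.charmatrix_apply_ne _ _ _ h]
      simp [Matrix.one_apply, h]

theorem main_bound {n : ℕ} (hn : 0 < n)
    (A : Matrix (Fin n) (Fin n) ℂ) (hA : A.IsHermitian)
    (b : ℝ) (hb : ∀ i, hA.eigenvalues i < b)
    (x : ℝ) (hx : (chir 2 A).IsRoot (x : ℂ)) :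
    x ≤ b - Finset.univ.inf' (Finset.univ_nonempty_iff.mpr ⟨⟨0, hn⟩⟩)
      (fun i => 1 / (4 * (((((b : ℂ) • (1 : Matrix (Fin n) (Fin n) ℂ)) - A)⁻¹ i i).re))) := by
  by_contra hcon
  push Not at hcon
  set B := ((b : ℂ) • (1 : Matrix (Fin n) (Fin n) ℂ)) - A with hBdef
  have hB : B.PosDef := ChirTwo.posDef_sub A hA b hb
  have hlt : ∀ i, b - x < 1 / (4 * (B⁻¹ i i).re) := by
    intro i
    have := Finset.inf'_le (s := Finset.univ) (fun i => 1 / (4 * (B⁻¹ i i).re))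
      (Finset.mem_univ i)
    linarith
  have hM : ∀ i, 0 < (B⁻¹ i i).re := fun i => (Complex.pos_iff.mp (hB.inv.diag_pos (i := i))).1
  have hfin := (ChirTwo.good_base B hB).final (δ := max (b - x) 0) (le_max_right _ _) (by
    intro i
    have h1 := hlt i
    have h2 := hM i
    rw [lt_div_iff₀ (by positivity)] at h1
    rcases max_cases (b - x) 0 with ⟨h, _⟩ | ⟨h, _⟩
    · rw [h]; linarith
    · rw [h]; linarith) (x - b) (by
      have := le_max_left (b - x) 0
      linarith)
  rw [ChirTwo.DL_eq_detr] at hfin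
  apply hfin
  have := ChirTwo.chir_eval A (b : ℂ) (x : ℂ)
  rw [Polynomial.IsRoot.def.mp hx] at this
  rw [this, hBdef]
  push_cast
  rfl

end ChirTwo

/-- Root bound for the 2-characteristic polynomial: if `b` exceeds the largest eigenvalue
of the Hermitian matrix `A`, then every real root `x` of `χ₂[A]` satisfies
`x ≤ b - min_i 1/(4((bI - A)^{-1})_{ii})`. -/
theorem chir_two_root_bound {n : ℕ} (hn : 0 < n)
    (A : Matrix (Fin n) (Fin n) ℂ) (hA : A.IsHermitian)
    (b : ℝ) (hb : ∀ i, hA.eigenvalues i < b)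
    (x : ℝ) (hx : (chir 2 A).IsRoot (x : ℂ)) :
    x ≤ b - Finset.univ.inf' (Finset.univ_nonempty_iff.mpr ⟨⟨0, hn⟩⟩)
      (fun i => 1 / (4 * (((((b : ℂ) • (1 : Matrix (Fin n) (Fin n) ℂ)) - A)⁻¹ i i).re))) := by
  exact ChirTwo.main_bound hn A hA b hb x hx
end
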